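/- Let (m(s), s ∈ [0,1]) be a standard Brownian meander and (R(s), s ∈ [0,1]) a three-dimensional Bessel process started at 0. For every measurable non-negative functional F on continuous paths on [0,1], E[ F(m(s), s ∈ [0,1]) ] = (π/2)^{1/2} · E[ (1/R(1)) · F(R(s), s ∈ [0,1]) ]. -/

import Mathlib

open MeasureTheory ProbabilityTheory Real Set Filter

noncomputable section

variable {Ω : Type*} [MeasurableSpace Ω]

/-- A standard one-dimensional Brownian motion (indexed by `ℝ`, with the relevant
properties required for nonnegative times): starts at `0`, has continuous paths,
independent increments, and Gaussian increments of variance `t - s`. -/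
structure IsStdBM (P : Measure Ω) (B : ℝ → Ω → ℝ) : Prop where
  measurable : ∀ t : ℝ, Measurable (B t)
  start : ∀ ω, B 0 ω = 0
  cont : ∀ ω, Continuous fun t => B t ω
  indep : ∀ (n : ℕ) (t : Fin (n + 1) → ℝ), (∀ i, 0 ≤ t i) → Monotone t →
    iIndepFun
      (fun (i : Fin n) ω => B (t i.succ) ω - B (t i.castSucc) ω) P
  gauss : ∀ s t : ℝ, 0 ≤ s → s ≤ t →
    P.map (fun ω => B t ω - B s ω) = gaussianReal 0 (Real.toNNReal (t - s))

/-- A standard `d`-dimensional Brownian motion started at `0`: the coordinate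
processes are independent standard one-dimensional Brownian motions. -/
structure IsStdBMVec (d : ℕ) (P : Measure Ω) (B : ℝ → Ω → EuclideanSpace ℝ (Fin d)) : Prop where
  coord : ∀ i : Fin d, IsStdBM P (fun t ω => B t ω i)
  indepCoord : iIndepFun
    (fun (i : Fin d) ω => fun t : ℝ => B t ω i) P

/-- Last zero of `W` in `[0,1]`. -/
def lastZero (W : ℝ → Ω → ℝ) (ω : Ω) : ℝ := sSup {t ∈ Icc (0:ℝ) 1 | W t ω = 0}

/-- `m` is a standard Brownian meander: obtained from a Brownian motion `W` by
`m s = |W (g + s (1 - g))| / √(1 - g)`, where `g` is the last zero of `W` before time `1`. -/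
def IsBrownianMeander (P : Measure Ω) (m : ℝ → Ω → ℝ) : Prop :=
  ∃ W : ℝ → Ω → ℝ, IsStdBM P W ∧
    ∀ ω, ∀ s ∈ Icc (0:ℝ) 1,
      m s ω = |W (lastZero W ω + s * (1 - lastZero W ω)) ω| / Real.sqrt (1 - lastZero W ω)

/-- Running maximum `X̄(t) = sup_{s ∈ [0,t]} X(s)`. -/
def runMax (X : ℝ → Ω → ℝ) (t : ℝ) (ω : Ω) : ℝ := ⨆ s : Icc (0:ℝ) t, X s ω

/-- Maximal drawdown on `[0,T]` : `sup_{s ∈ [0,T]} (X̄(s) - X(s))`. -/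
def maxDDOn (X : ℝ → Ω → ℝ) (T : ℝ) (ω : Ω) : ℝ := ⨆ s : Icc (0:ℝ) T, (runMax X s ω - X s ω)

/-- Drawdown time `τ_λ^X := inf {t ≥ 0 : X̄(t) - X(t) ≥ λ}`. -/
def ddTime (lam : ℝ) (X : ℝ → Ω → ℝ) (ω : Ω) : ℝ :=
  sInf {t | 0 ≤ t ∧ lam ≤ runMax X t ω - X t ω}

/-- Three-dimensional Bessel process built from a 3-dimensional Brownian motion. -/
def bessel3 (β : ℝ → Ω → EuclideanSpace ℝ (Fin 3)) (t : ℝ) (ω : Ω) : ℝ := ‖β t ω‖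

/-- Squared four-dimensional Bessel process built from a 4-dimensional Brownian motion. -/
def sqBessel4 (γ : ℝ → Ω → EuclideanSpace ℝ (Fin 4)) (t : ℝ) (ω : Ω) : ℝ := ‖γ t ω‖ ^ 2

end

open scoped ENNReal

namespace Imhof

abbrev E3 := EuclideanSpace ℝ (Fin 3)

noncomputable def e0 : E3 := EuclideanSpace.single 0 1

noncomputable def KK (t : ℝ) (h : ℝ → ℝ≥0∞) (x : ℝ) : ℝ≥0∞ :=
  ∫⁻ z, h ‖x • e0 + √t • z‖ ∂(stdGaussian E3)

lemma norm_e0 : ‖e0‖ = 1 := by simp [e0]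

lemma KK_rot (t : ℝ) (h : ℝ → ℝ≥0∞) (v : E3) :
    ∫⁻ z, h ‖v + √t • z‖ ∂(stdGaussian E3) = KK t h ‖v‖ := by
  have hn : ‖v‖ = ‖‖v‖ • e0‖ := by simp [norm_smul, norm_e0]
  set f : E3 ≃ₗᵢ[ℝ] E3 := (Submodule.reflection (ℝ ∙ (v - ‖v‖ • e0))ᗮ) with hf
  have h1 : f v = ‖v‖ • e0 := Submodule.reflection_sub hn
  unfold KK
  conv_rhs => rw [← stdGaussian_map f]
  have : MeasurableEmbedding f := f.toHomeomorph.measurableEmbedding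
  rw [this.lintegral_map]
  refine lintegral_congr fun z => ?_
  rw [← h1, ← map_smul, ← map_add, LinearIsometryEquiv.norm_map]

lemma KK_meas (t : ℝ) {h : ℝ → ℝ≥0∞} (hh : Measurable h) : Measurable (KK t h) := by
  unfold KK
  apply Measurable.lintegral_prod_right' (f := fun p : ℝ × E3 => h ‖p.1 • e0 + √t • p.2‖)
  fun_prop

lemma KK_scale {t : ℝ} (ht : 0 < t) (h : ℝ → ℝ≥0∞) (x : ℝ) :
    KK t h x = KK 1 (fun r => h (√t * r)) (x / √t) := by
  unfold KK
  refine lintegral_congr fun z => ?_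
  have h0 : 0 < √t := sqrt_pos.2 ht
  congr 1
  rw [← abs_of_pos h0, ← Real.norm_eq_abs, ← norm_smul, Real.norm_eq_abs, abs_of_pos h0, smul_add,
    smul_smul, mul_div_cancel₀ _ h0.ne']
  simp

noncomputable def pp (x : ℝ) : ℝ := (√(2 * π))⁻¹ * exp (- x ^ 2 / 2)

lemma pp_nonneg (x : ℝ) : 0 ≤ pp x := by unfold pp; positivity
lemma pp_cont : Continuous pp := by unfold pp; fun_prop

lemma lint_gauss {f : ℝ → ℝ≥0∞} (hf : Measurable f) :
    ∫⁻ x, f x ∂(gaussianReal 0 1) = ∫⁻ x, ENNReal.ofReal (pp x) * f x := by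
  rw [gaussianReal_of_var_ne_zero _ one_ne_zero,
    lintegral_withDensity_eq_lintegral_mul _ (measurable_gaussianPDF _ _) hf]
  refine lintegral_congr fun x => ?_
  simp [gaussianPDF, gaussianPDFReal, pp]

lemma lint_3d {h : ℝ → ℝ≥0∞} (hh : Measurable h) (x : ℝ) :
    KK 1 h x = ∫⁻ a, ∫⁻ b, ∫⁻ c, h √((x + a) ^ 2 + b ^ 2 + c ^ 2) ∂(gaussianReal 0 1)
      ∂(gaussianReal 0 1) ∂(gaussianReal 0 1) := by
  unfold KK
  rw [← map_pi_eq_stdGaussian, lintegral_map (by fun_prop) (by fun_prop)]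
  have e1 := (measurePreserving_piFinSuccAbove (fun _ : Fin 3 => gaussianReal 0 1) 0).symm
  rw [← e1.lintegral_comp (by fun_prop)]
  rw [lintegral_prod _ (by
    apply Measurable.aemeasurable
    have := e1.measurable
    fun_prop)]
  refine lintegral_congr fun a => ?_
  have e2 := (measurePreserving_piFinSuccAbove (fun _ : Fin 2 => gaussianReal 0 1) 0).symm
  have e3 := (measurePreserving_funUnique (gaussianReal 0 1) (Fin 1)).symm
  have m1 := e1.measurable
  have m2 := e2.measurable
  have m3 := e3.measurable
  erw [← e2.lintegral_comp (by fun_prop)]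
  rw [lintegral_prod _ (by
    apply Measurable.aemeasurable
    fun_prop)]
  refine lintegral_congr fun b => ?_
  erw [← e3.lintegral_comp (by fun_prop)]
  refine lintegral_congr fun c => ?_
  simp [EuclideanSpace.norm_eq, Fin.sum_univ_three, e0, MeasurableEquiv.piFinSuccAbove, Fin.insertNthEquiv]
  rfl

lemma pp_mul (b c : ℝ) : pp b * pp c = (2 * π)⁻¹ * exp (-(b ^ 2 + c ^ 2) / 2) := by
  unfold pp
  have h : √(2 * π) * √(2 * π) = 2 * π := mul_self_sqrt (by positivity)
  rw [mul_mul_mul_comm, ← mul_inv, h, ← exp_add]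
  ring_nf

lemma lint_2d {G : ℝ → ℝ≥0∞} (hG : Measurable G) :
    ∫⁻ b, ∫⁻ c, G (b ^ 2 + c ^ 2) ∂(gaussianReal 0 1) ∂(gaussianReal 0 1)
      = ∫⁻ ρ in Ioi (0:ℝ), ENNReal.ofReal (ρ * exp (- ρ ^ 2 / 2)) * G (ρ ^ 2) := by
  have hpp : Measurable pp := pp_cont.measurable
  rw [lint_gauss (by
    apply Measurable.lintegral_prod_right' (f := fun p : ℝ × ℝ => G (p.1 ^ 2 + p.2 ^ 2))
    fun_prop)]
  have h1 : ∀ b : ℝ, ENNReal.ofReal (pp b) * ∫⁻ c, G (b ^ 2 + c ^ 2) ∂(gaussianReal 0 1)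
      = ∫⁻ c, ENNReal.ofReal (pp b * pp c) * G (b ^ 2 + c ^ 2) := by
    intro b
    rw [lint_gauss (by fun_prop), ← lintegral_const_mul _ (by fun_prop)]
    refine lintegral_congr fun c => ?_
    rw [ENNReal.ofReal_mul (pp_nonneg _), mul_assoc]
  simp_rw [h1]
  rw [← lintegral_prod (fun p : ℝ × ℝ => ENNReal.ofReal (pp p.1 * pp p.2) * G (p.1 ^ 2 + p.2 ^ 2))
    (by fun_prop), ← Measure.volume_eq_prod, ← lintegral_comp_polarCoord_symm]
  rw [show polarCoord.target = Ioi (0:ℝ) ×ˢ Ioo (-π) π from rfl, Measure.volume_eq_prod,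
    ← Measure.prod_restrict]
  have h2 : ∀ p : ℝ × ℝ, ENNReal.ofReal p.1 • (ENNReal.ofReal (pp (polarCoord.symm p).1 * pp (polarCoord.symm p).2)
      * G ((polarCoord.symm p).1 ^ 2 + (polarCoord.symm p).2 ^ 2)) =
      ENNReal.ofReal p.1 * (ENNReal.ofReal ((2 * π)⁻¹ * exp (- p.1 ^ 2 / 2)) * G (p.1 ^ 2)) := by
    intro p
    have h3 : (polarCoord.symm p).1 ^ 2 + (polarCoord.symm p).2 ^ 2 = p.1 ^ 2 := by
      simp only [polarCoord_symm_apply]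
      nlinarith [sin_sq_add_cos_sq p.2]
    rw [pp_mul, h3, smul_eq_mul]
  simp_rw [h2]
  rw [lintegral_prod _ (by fun_prop)]
  simp only [lintegral_const, Measure.restrict_apply MeasurableSet.univ, univ_inter, volume_Ioo]
  refine setLIntegral_congr_fun measurableSet_Ioi fun r hr => ?_
  have hr : 0 < r := hr
  rw [mul_assoc, mul_assoc, mul_comm (G _), ← mul_assoc, ← mul_assoc, ← ENNReal.ofReal_mul hr.le, ← ENNReal.ofReal_mul (by positivity)]
  congr 2
  field_simp
  ring

lemma lint_sub {h : ℝ → ℝ≥0∞} (A : ℝ) :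
    ∫⁻ ρ in Ioi (0:ℝ), ENNReal.ofReal (ρ * exp (- ρ ^ 2 / 2)) * h (√(A ^ 2 + ρ ^ 2))
      = ∫⁻ r in Ioi |A|, ENNReal.ofReal (r * exp (- r ^ 2 / 2) * exp (A ^ 2 / 2)) * h r := by
  have him : (fun ρ : ℝ => √(A ^ 2 + ρ ^ 2)) '' Ioi 0 = Ioi |A| := by
    ext r
    simp only [mem_image, mem_Ioi]
    constructor
    · rintro ⟨ρ, hρ, rfl⟩
      apply lt_sqrt_of_sq_lt
      rw [sq_abs]; nlinarith
    · intro hr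
      have h0 : 0 ≤ |A| := abs_nonneg A
      have h1 : 0 < r ^ 2 - A ^ 2 := by rw [← sq_abs A]; nlinarith
      refine ⟨√(r ^ 2 - A ^ 2), sqrt_pos.2 h1, ?_⟩
      rw [sq_sqrt h1.le]
      rw [show A ^ 2 + (r ^ 2 - A ^ 2) = r ^ 2 by ring, sqrt_sq (by linarith)]
  rw [← him, lintegral_image_eq_lintegral_abs_deriv_mul (f' := fun ρ => ρ / √(A ^ 2 + ρ ^ 2))
    measurableSet_Ioi]
  · refine setLIntegral_congr_fun measurableSet_Ioi fun r hr => ?_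
    have hr : 0 < r := hr
    have h1 : 0 < A ^ 2 + r ^ 2 := by positivity
    rw [← mul_assoc, ← ENNReal.ofReal_mul (by positivity), abs_of_pos (by positivity), sq_sqrt h1.le,
      mul_assoc (√_), ← exp_add, ← mul_assoc, div_mul_cancel₀ _ (by positivity)]
    congr 4
    ring
  · intro r hr
    have hr : 0 < r := hr
    have h1 : 0 < A ^ 2 + r ^ 2 := by positivity
    have h2 : HasDerivAt (fun ρ : ℝ => A ^ 2 + ρ ^ 2) (2 * r) r := by
      simpa using ((hasDerivAt_pow 2 r).const_add (A ^ 2))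
    have := (h2.sqrt h1.ne').hasDerivWithinAt (s := Ioi 0)
    rw [mul_div_mul_left _ _ two_ne_zero] at this
    exact this
  · intro a ha b hb hab
    have ha : 0 < a := ha
    have hb : 0 < b := hb
    simp only at hab
    rw [sqrt_inj (by positivity) (by positivity)] at hab
    nlinarith

noncomputable def kk (x r : ℝ) : ℝ := r * exp (-r ^ 2 / 2) * ((√(2 * π))⁻¹ * exp (-x ^ 2 / 2) *
  ∫ a in (-r)..r, exp (x * a))

lemma KK_one {h : ℝ → ℝ≥0∞} (hh : Measurable h) (x : ℝ) :
    KK 1 h x = ∫⁻ r in Ioi (0:ℝ), ENNReal.ofReal (kk x r) * h r := by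
  have hpp : Measurable pp := pp_cont.measurable
  have hA : ∀ A : ℝ, ∫⁻ b, ∫⁻ c, h √(A ^ 2 + b ^ 2 + c ^ 2) ∂(gaussianReal 0 1)
      ∂(gaussianReal 0 1) = ∫⁻ r in Ioi |A|, ENNReal.ofReal (r * exp (- r ^ 2 / 2) * exp (A ^ 2 / 2)) * h r := by
    intro A
    rw [← lint_sub, ← lint_2d (G := fun u => h √(A ^ 2 + u)) (by fun_prop)]
    simp_rw [add_assoc]
  rw [lint_3d hh]
  simp_rw [hA]
  set Φ : ℝ → ℝ → ℝ≥0∞ := fun A r => (Ioi |A|).indicator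
    (fun r => ENNReal.ofReal (r * exp (- r ^ 2 / 2) * exp (A ^ 2 / 2)) * h r) r with hΦ
  have hΦm : Measurable (fun p : ℝ × ℝ => Φ p.1 p.2) := by
    have : (fun p : ℝ × ℝ => Φ p.1 p.2) = {p : ℝ × ℝ | |p.1| < p.2}.indicator
      (fun p => ENNReal.ofReal (p.2 * exp (- p.2 ^ 2 / 2) * exp (p.1 ^ 2 / 2)) * h p.2) := by
      ext p; simp [hΦ, indicator]
    rw [this]
    apply Measurable.indicator (by fun_prop)
    exact measurableSet_lt (by fun_prop) (by fun_prop)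
  have hA2 : ∀ A : ℝ, ∫⁻ r in Ioi |A|, ENNReal.ofReal (r * exp (- r ^ 2 / 2) * exp (A ^ 2 / 2)) * h r
    = ∫⁻ r, Φ A r := by
    intro A
    rw [lintegral_indicator measurableSet_Ioi]
  simp_rw [hA2]
  have hm1 : Measurable fun A => ∫⁻ r, Φ A r := hΦm.lintegral_prod_right'
  rw [lint_gauss (by fun_prop)]
  rw [← lintegral_sub_right_eq_self _ x]
  simp only [add_sub_cancel]
  have : ∀ a, ENNReal.ofReal (pp (a - x)) * ∫⁻ r, Φ a r = ∫⁻ r, ENNReal.ofReal (pp (a - x)) * Φ a r := by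
    intro a
    have h3 : Measurable (Φ a) := hΦm.comp (measurable_const.prodMk measurable_id)
    rw [lintegral_const_mul _ h3]
  simp_rw [this]
  rw [lintegral_lintegral_swap (by
    apply Measurable.aemeasurable
    exact Measurable.mul (by fun_prop) hΦm)]
  rw [← lintegral_indicator measurableSet_Ioi]
  refine lintegral_congr fun r => ?_
  by_cases hr : 0 < r
  · rw [indicator_of_mem (by exact hr)]
    have : ∀ a, ENNReal.ofReal (pp (a - x)) * Φ a r = (Ioo (-r) r).indicator (fun a =>
       ENNReal.ofReal (exp (x * a)) * (ENNReal.ofReal (r * exp (-r ^ 2 / 2) * ((√(2 * π))⁻¹ * exp (-x ^ 2 / 2))) * h r)) a := by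
      intro a
      by_cases ha : |a| < r
      · rw [indicator_of_mem (by exact abs_lt.1 ha)]
        simp only [hΦ]
        rw [indicator_of_mem (by exact ha), ← mul_assoc, ← mul_assoc, ← ENNReal.ofReal_mul (pp_nonneg _),
          ← ENNReal.ofReal_mul (by positivity)]
        congr 2
        unfold pp
        have e1 : exp (-(a - x) ^ 2 / 2) = exp (x * a) * exp (-x ^ 2 / 2) * exp (-a ^ 2 / 2) := by
          rw [← exp_add, ← exp_add]; ring_nf
        have e2 : exp (-a ^ 2 / 2) * exp (a ^ 2 / 2) = 1 := by
          rw [← exp_add]; ring_nf; simp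
        rw [e1]
        linear_combination ((√(2 * π))⁻¹ * exp (x * a) * exp (-x ^ 2 / 2) * r * exp (-r ^ 2 / 2)) * e2
      · rw [indicator_of_notMem (by exact fun h => ha (abs_lt.2 h))]
        simp only [hΦ]
        rw [indicator_of_notMem (by exact ha), mul_zero]
    simp_rw [this]
    rw [lintegral_indicator measurableSet_Ioo, lintegral_mul_const _ (by fun_prop), ← mul_assoc]
    congr 1
    have h_intg : IntegrableOn (fun a => exp (x * a)) (Ioo (-r) r) :=
      (Continuous.integrableOn_Icc (by fun_prop)).mono_set Ioo_subset_Icc_self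
    rw [← ofReal_integral_eq_lintegral_ofReal h_intg (ae_of_all _ fun a => (exp_pos _).le),
      ← ENNReal.ofReal_mul (setIntegral_nonneg measurableSet_Ioo fun a _ => (exp_pos _).le), kk,
      intervalIntegral.integral_of_le (by linarith), integral_Ioc_eq_integral_Ioo]
    congr 1
    ring
  · rw [indicator_of_notMem (by exact hr)]
    have : ∀ a, ENNReal.ofReal (pp (a - x)) * Φ a r = 0 := by
      intro a
      simp only [hΦ]
      rw [indicator_of_notMem, mul_zero]
      simp only [mem_Ioi, not_lt] at hr ⊢
      exact hr.trans (abs_nonneg _)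
    simp [this]

lemma kk_mul (x r : ℝ) : x * kk x r = r * (pp (r - x) - pp (r + x)) := by
  have h1 : x * ∫ a in (-r)..r, exp (x * a) = exp (x * r) - exp (x * (-r)) := by
    rw [← intervalIntegral.integral_const_mul]
    apply intervalIntegral.integral_eq_sub_of_hasDerivAt (f := fun a => exp (x * a))
    · intro a _
      have h2 : HasDerivAt (fun a => x * a) x a := by simpa using (hasDerivAt_id a).const_mul x
      have := h2.exp
      rwa [mul_comm] at this
    · apply Continuous.intervalIntegrable; fun_prop
  unfold kk pp
  have e1 : exp (-(r - x) ^ 2 / 2) = exp (-r ^ 2 / 2) * exp (-x ^ 2 / 2) * exp (x * r) := by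
    rw [← exp_add, ← exp_add]; ring_nf
  have e2 : exp (-(r + x) ^ 2 / 2) = exp (-r ^ 2 / 2) * exp (-x ^ 2 / 2) * exp (x * (-r)) := by
    rw [← exp_add, ← exp_add]; ring_nf
  rw [e1, e2]
  linear_combination (r * exp (-r ^ 2 / 2) * ((√(2 * π))⁻¹ * exp (-x ^ 2 / 2))) * h1

end Imhof

namespace Imhof

lemma pp_neg (x : ℝ) : pp (-x) = pp x := by simp [pp]

lemma kk_nonneg {x r : ℝ} (hr : 0 ≤ r) : 0 ≤ kk x r := by
  unfold kk
  have : 0 ≤ ∫ a in (-r)..r, exp (x * a) :=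
    intervalIntegral.integral_nonneg (by linarith) fun a _ => (exp_pos _).le
  positivity

lemma lint_pos (f : ℝ → ℝ) (h : ℝ → ℝ≥0∞) :
    ∫⁻ u, ENNReal.ofReal (f u) * (ENNReal.ofReal u * h u)
      = ∫⁻ u in Ioi (0:ℝ), ENNReal.ofReal (f u) * (ENNReal.ofReal u * h u) := by
  rw [← lintegral_indicator measurableSet_Ioi]
  refine lintegral_congr fun u => ?_
  by_cases hu : 0 < u
  · rw [indicator_of_mem (by exact hu)]
  · rw [indicator_of_notMem (by exact hu), ENNReal.ofReal_of_nonpos (p := u) (by linarith)]; simp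

lemma KK_refl_one {h : ℝ → ℝ≥0∞} (hh : Measurable h) {x : ℝ} (hx : 0 < x) :
    ENNReal.ofReal x * KK 1 h x
      + ∫⁻ y, ENNReal.ofReal (-(x + y)) * h (-(x + y)) ∂(gaussianReal 0 1)
      = ∫⁻ y, ENNReal.ofReal (x + y) * h (x + y) ∂(gaussianReal 0 1) := by
  have hpp : Measurable pp := pp_cont.measurable
  rw [lint_gauss (by fun_prop), lint_gauss (by fun_prop), KK_one hh]
  have h1 : ∫⁻ y, ENNReal.ofReal (pp y) * (ENNReal.ofReal (x + y) * h (x + y))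
     = ∫⁻ u in Ioi (0:ℝ), ENNReal.ofReal (pp (u - x)) * (ENNReal.ofReal u * h u) := by
    rw [← lintegral_sub_right_eq_self _ x]
    simp only [add_sub_cancel]
    rw [lint_pos (fun u => pp (u - x))]
  have h2 : ∫⁻ y, ENNReal.ofReal (pp y) * (ENNReal.ofReal (-(x + y)) * h (-(x + y)))
     = ∫⁻ u in Ioi (0:ℝ), ENNReal.ofReal (pp (u + x)) * (ENNReal.ofReal u * h u) := by
    rw [← lintegral_sub_left_eq_self _ (-x)]
    rw [← lint_pos (fun u => pp (u + x))]
    refine lintegral_congr fun u => ?_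
    rw [show -x - u = -(u + x) by ring, pp_neg, show -(x + -(u + x)) = u by ring]
  have hkm : Measurable (kk x) := by
    have h3 : kk x = fun r => r * (pp (r - x) - pp (r + x)) / x := by
      ext r; rw [← kk_mul]; field_simp
    rw [h3]; fun_prop
  rw [h1, h2, ← lintegral_const_mul _ (by fun_prop), ← lintegral_add_left (by fun_prop)]
  refine setLIntegral_congr_fun measurableSet_Ioi fun r hr => ?_
  have hr : 0 < r := hr
  rw [← mul_assoc, ← mul_assoc, ← mul_assoc, ← ENNReal.ofReal_mul hx.le, ← add_mul,
    ← ENNReal.ofReal_mul (pp_nonneg _), ← ENNReal.ofReal_mul (pp_nonneg _), ← ENNReal.ofReal_add]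
  · congr 2
    rw [kk_mul]; ring
  · exact mul_nonneg hx.le (kk_nonneg hr.le)
  · exact mul_nonneg (pp_nonneg _) hr.le

lemma gauss_scale {t : ℝ} (ht : 0 ≤ t) {f : ℝ → ℝ≥0∞} (hf : Measurable f) :
    ∫⁻ y, f y ∂(gaussianReal 0 t.toNNReal) = ∫⁻ y, f (√t * y) ∂(gaussianReal 0 1) := by
  have h := gaussianReal_map_const_mul (μ := 0) (v := 1) (√t)
  have h2 : NNReal.mk (√t ^ 2) (sq_nonneg _) * 1 = t.toNNReal := by
    ext; simp [ht, sq_sqrt]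
  rw [mul_zero, h2] at h
  rw [← h, lintegral_map hf (by fun_prop)]

lemma KK_refl {t : ℝ} (ht : 0 < t) {h : ℝ → ℝ≥0∞} (hh : Measurable h) {x : ℝ} (hx : 0 < x) :
    ENNReal.ofReal x * KK t h x
      + ∫⁻ y, ENNReal.ofReal (-(x + y)) * h (-(x + y)) ∂(gaussianReal 0 t.toNNReal)
      = ∫⁻ y, ENNReal.ofReal (x + y) * h (x + y) ∂(gaussianReal 0 t.toNNReal) := by
  have h0 : 0 < √t := sqrt_pos.2 ht
  rw [gauss_scale ht.le (by fun_prop), gauss_scale ht.le (by fun_prop), KK_scale ht]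
  have := KK_refl_one (h := fun r => h (√t * r)) (by fun_prop) (div_pos hx h0)
  have h2 := congrArg (fun z => ENNReal.ofReal √t * z) this
  simp only [mul_add] at h2
  rw [← mul_assoc, ← ENNReal.ofReal_mul h0.le, ← lintegral_const_mul _ (by fun_prop),
    ← lintegral_const_mul _ (by fun_prop), mul_div_cancel₀ _ h0.ne'] at h2
  have e1 : ∀ y, √t * (x / √t + y) = x + √t * y := by intro y; field_simp
  have e2 : ∀ y, √t * -(x / √t + y) = - (x + √t * y) := by intro y; field_simp
  have e3 : ∀ y, √t * (x / √t) + √t * y = x + √t * y := by intro y; field_simp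
  simp only [← mul_assoc, ← ENNReal.ofReal_mul h0.le, e1, e2] at h2
  exact h2

lemma KK_zero_time (h : ℝ → ℝ≥0∞) {x : ℝ} (hx : 0 ≤ x) : KK 0 h x = h x := by
  simp [KK, norm_smul, norm_e0, abs_of_nonneg hx]

lemma two_pp_zero : 2 * (√(2 * π))⁻¹ = √(2 / π) := by
  rw [eq_comm, sqrt_eq_iff_mul_self_eq (by positivity) (by positivity)]
  have h : √(2 * π) * √(2 * π) = 2 * π := mul_self_sqrt (by positivity)
  rw [mul_mul_mul_comm, ← mul_inv, h]
  field_simp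
  try norm_num

lemma KK_inv_zero : KK 1 (fun r => ENNReal.ofReal (1 / r)) 0 = ENNReal.ofReal √(2 / π) := by
  rw [KK_one (by fun_prop)]
  have : ∀ r ∈ Ioi (0:ℝ), ENNReal.ofReal (kk 0 r) * ENNReal.ofReal (1 / r)
     = ENNReal.ofReal √(2 / π) * ENNReal.ofReal (r * exp (- (1/2) * r ^ 2)) := by
    intro r hr
    have hr : 0 < r := hr
    rw [← ENNReal.ofReal_mul (kk_nonneg hr.le), ← ENNReal.ofReal_mul (by positivity)]
    congr 1
    simp only [kk, zero_mul, exp_zero, intervalIntegral.integral_const, ← two_pp_zero]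
    simp
    field_simp
    ring_nf
    try simp
  rw [setLIntegral_congr_fun measurableSet_Ioi this, lintegral_const_mul _ (by fun_prop),
    ← ofReal_integral_eq_lintegral_ofReal (integrable_mul_exp_neg_mul_sq (by norm_num)).integrableOn]
  · have h1 : ∫ r in Ioi (0:ℝ), r * exp (-(1/2) * r ^ 2) = 1 := by
      have h4 := integral_mul_cexp_neg_mul_sq (b := 1/2) (by norm_num)
      have h5 : ∀ r : ℝ, (r : ℂ) * Complex.exp (-(1/2) * (r:ℂ) ^ 2) = ((r * exp (-(1/2) * r ^ 2) : ℝ) : ℂ) := by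
        intro r; push_cast; rfl
      simp_rw [h5] at h4
      rw [integral_complex_ofReal] at h4
      norm_num at h4
      norm_num
      exact_mod_cast h4
    rw [h1]; simp
  · filter_upwards [self_mem_ae_restrict measurableSet_Ioi] with r hr
    have hr : 0 < r := hr
    simp only [Pi.zero_apply]
    positivity

lemma KK_inv_le {x : ℝ} (hx : 0 < x) :
    KK 1 (fun r => ENNReal.ofReal (1 / r)) x ≤ ENNReal.ofReal √(2 / π) := by
  have h := KK_refl_one (h := fun r => ENNReal.ofReal (1 / r)) (by fun_prop) hx
  set γ := gaussianReal 0 1 with hγ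
  have h1 : ∀ u : ℝ, ENNReal.ofReal u * ENNReal.ofReal (1 / u) = (Ioi (0:ℝ)).indicator 1 u := by
    intro u
    by_cases hu : 0 < u
    · rw [indicator_of_mem (by exact hu), ← ENNReal.ofReal_mul hu.le, mul_one_div_cancel hu.ne']; simp
    · rw [indicator_of_notMem (by exact hu), ENNReal.ofReal_of_nonpos (p := u) (by linarith)]; simp
  simp only [h1] at h
  have h2 : ∫⁻ y, (Ioi (0:ℝ)).indicator 1 (x + y) ∂γ = γ (Ioi (-x)) := by
    rw [← lintegral_indicator_one measurableSet_Ioi]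
    refine lintegral_congr fun y => ?_
    simp only [indicator, mem_Ioi, neg_lt_iff_pos_add', Pi.one_apply]
  have h3 : ∫⁻ y, (Ioi (0:ℝ)).indicator 1 (-(x + y)) ∂γ = γ (Ioi x) := by
    have h4 : γ.map (fun y => -y) = γ := by rw [hγ, gaussianReal_map_neg]; simp
    conv_rhs => rw [← h4, ← lintegral_indicator_one measurableSet_Ioi, lintegral_map (measurable_one.indicator measurableSet_Ioi) (by fun_prop)]
    refine lintegral_congr fun y => ?_
    have : 0 < -(x + y) ↔ x < -y := by constructor <;> intro _ <;> linarith
    simp only [indicator, mem_Ioi, this, Pi.one_apply]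
  have h5 : γ (Ioi (-x)) ≤ γ (Ioc (-x) x) + γ (Ioi x) := by
    rw [← Ioc_union_Ioi_eq_Ioi (a := -x) (b := x) (by linarith)]
    exact measure_union_le _ _
  have h6 : γ (Ioc (-x) x) ≤ ENNReal.ofReal x * ENNReal.ofReal √(2 / π) := by
    rw [← lintegral_indicator_one measurableSet_Ioc, lint_gauss (measurable_one.indicator measurableSet_Ioc)]
    calc _ ≤ ∫⁻ y, (Ioc (-x) x).indicator (fun _ => ENNReal.ofReal (√(2 * π))⁻¹) y := by
          refine lintegral_mono fun y => ?_
          by_cases hy : y ∈ Ioc (-x) x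
          · simp only [indicator_of_mem hy, Pi.one_apply, mul_one]
            apply ENNReal.ofReal_le_ofReal
            unfold pp
            apply mul_le_of_le_one_right (by positivity)
            rw [exp_le_one_iff]
            nlinarith [sq_nonneg y]
          · simp [indicator_of_notMem hy]
      _ = _ := by
          rw [lintegral_indicator measurableSet_Ioc, setLIntegral_const, volume_Ioc, ← two_pp_zero,
            ← ENNReal.ofReal_mul (by positivity), ← ENNReal.ofReal_mul (by positivity)]
          congr 1; ring
  rw [h2, h3] at h
  have h7 : ENNReal.ofReal x * KK 1 (fun r => ENNReal.ofReal (1 / r)) x + γ (Ioi x)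
      ≤ ENNReal.ofReal x * ENNReal.ofReal √(2 / π) + γ (Ioi x) := by
    rw [h]; exact h5.trans (by gcongr)
  have h8 := (ENNReal.add_le_add_iff_right (measure_ne_top γ _)).1 h7
  rwa [ENNReal.mul_le_mul_iff_right (by simpa using hx) ENNReal.ofReal_ne_top] at h8

end Imhof

namespace Imhof

/-- Freezing lemma. -/
lemma freeze {Ω S β : Type*} [MeasurableSpace Ω] [MeasurableSpace S] [MeasurableSpace β]
    {P : Measure Ω} [IsProbabilityMeasure P] {U : Ω → S} {Y : Ω → β} (hU : Measurable U)
    (hY : Measurable Y) (hi : IndepFun U Y P) {f : S × β → ℝ≥0∞} (hf : Measurable f) :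
    ∫⁻ ω, f (U ω, Y ω) ∂P = ∫⁻ ω, ∫⁻ y, f (U ω, y) ∂(P.map Y) ∂P := by
  have h2 := (indepFun_iff_map_prod_eq_prod_map_map hU.aemeasurable hY.aemeasurable).1 hi
  have h3 := lintegral_map (μ := P) hf (hU.prodMk hY)
  rw [h2] at h3
  have := Measure.isProbabilityMeasure_map hY.aemeasurable (μ := P)
  rw [← h3, lintegral_prod _ hf.aemeasurable, lintegral_map hf.lintegral_prod_right' hU]

structure BMF {Ω : Type*} [mΩ : MeasurableSpace Ω] (P : Measure Ω) (X : ℝ → Ω → ℝ)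
    (G : ℝ → MeasurableSpace Ω) : Prop where
  le : ∀ s, 0 ≤ s → G s ≤ mΩ
  mono : ∀ s t, 0 ≤ s → s ≤ t → G s ≤ G t
  adapted : ∀ s, 0 ≤ s → Measurable[G s] (X s)
  cont : ∀ ω, Continuous fun t => X t ω
  indep : ∀ s t, 0 ≤ s → s ≤ t →
    Indep (G s) (MeasurableSpace.comap (fun ω => X t ω - X s ω) inferInstance) P
  law : ∀ s t, 0 ≤ s → s ≤ t → P.map (fun ω => X t ω - X s ω) = gaussianReal 0 (t - s).toNNReal

variable {Ω : Type*} [mΩ : MeasurableSpace Ω] {P : Measure Ω} [IsProbabilityMeasure P]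
  {X : ℝ → Ω → ℝ} {G : ℝ → MeasurableSpace Ω}

lemma BMF.meas (hX : BMF P X G) {s : ℝ} (hs : 0 ≤ s) : Measurable (X s) :=
  (hX.adapted s hs).mono (hX.le s hs) le_rfl

lemma BMF.neg (hX : BMF P X G) : BMF P (fun t ω => - X t ω) G where
  le := hX.le
  mono := hX.mono
  adapted s hs := (hX.adapted s hs).neg
  cont ω := (hX.cont ω).neg
  indep s t hs hst := by
    refine indep_of_indep_of_le_right (hX.indep s t hs hst) ?_
    have : (fun ω => -X t ω - -X s ω) = (fun x : ℝ => -x) ∘ (fun ω => X t ω - X s ω) := by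
      ext ω; simp; ring
    rw [this, ← MeasurableSpace.comap_comp]
    exact MeasurableSpace.comap_mono (measurable_neg.comap_le)
  law s t hs hst := by
    have : (fun ω => -X t ω - -X s ω) = (fun x : ℝ => -x) ∘ (fun ω => X t ω - X s ω) := by
      ext ω; simp; ring
    rw [this, ← Measure.map_map (by fun_prop) (by
      have h1 := hX.meas (hs.trans hst)
      have h2 := hX.meas hs
      fun_prop), hX.law s t hs hst,
      gaussianReal_map_neg]; simp

lemma BMF.step (hX : BMF P X G) {s t : ℝ} (hs : 0 ≤ s) (hst : s ≤ t) {A : Set Ω}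
    (hA : MeasurableSet[G s] A) {f : ℝ × ℝ → ℝ≥0∞} (hf : Measurable f) :
    ∫⁻ ω in A, f (X s ω, X t ω - X s ω) ∂P
      = ∫⁻ ω in A, ∫⁻ y, f (X s ω, y) ∂(gaussianReal 0 (t - s).toNNReal) ∂P := by
  have hA' : MeasurableSet A := hX.le s hs _ hA
  rw [← lintegral_indicator hA', ← lintegral_indicator hA']
  have hmY : Measurable (fun ω => X t ω - X s ω) := (hX.meas (hs.trans hst)).sub (hX.meas hs)
  have hUG : Measurable[G s] (fun ω => (A.indicator (fun _ => (1 : ℝ≥0∞)) ω, X s ω)) :=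
    (measurable_const.indicator hA).prodMk (hX.adapted s hs)
  have hU : Measurable (fun ω => (A.indicator (fun _ => (1 : ℝ≥0∞)) ω, X s ω)) :=
    hUG.mono (hX.le s hs) le_rfl
  have h := freeze hU hmY (f := fun p => p.1.1 * f (p.1.2, p.2)) (by
      rw [IndepFun_iff_Indep]
      exact indep_of_indep_of_le_left (hX.indep s t hs hst) hUG.comap_le) (by fun_prop)
  rw [hX.law s t hs hst] at h
  convert h using 1
  · refine lintegral_congr fun ω => ?_
    by_cases hω : ω ∈ A <;> simp [hω]
  · refine lintegral_congr fun ω => ?_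
    by_cases hω : ω ∈ A <;> simp [hω]

/-- event of a zero in `[a,b]`. -/
def Zs (X : ℝ → Ω → ℝ) (a b : ℝ) : Set Ω := {ω | ∃ u ∈ Icc a b, X u ω = 0}

lemma Zs_meas {m : MeasurableSpace Ω} {X : ℝ → Ω → ℝ} {a b : ℝ}
    (hc : ∀ ω, Continuous fun t => X t ω) (hm : ∀ u ∈ Icc a b, Measurable[m] (X u)) :
    MeasurableSet[m] (Zs X a b) := by
  by_cases hab : a ≤ b
  swap
  · have : Zs X a b = ∅ := by
      ext ω; simp [Zs, Icc_eq_empty hab]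
    rw [this]; exact @MeasurableSet.empty _ m
  have key : Zs X a b = ⋂ n : ℕ, ⋃ q : ℚ, {ω | |X (projIcc a b hab q) ω| < 1 / ((n:ℝ) + 1)} := by
    ext ω
    simp only [mem_iInter, mem_iUnion, mem_ofPred_eq, Zs]
    have hcq : Continuous fun t : ℝ => X (projIcc a b hab t) ω :=
      (hc ω).comp (continuous_subtype_val.comp continuous_projIcc)
    constructor
    · rintro ⟨u, hu, h0⟩ n
      have ho : IsOpen {t : ℝ | |X (projIcc a b hab t) ω| < 1 / ((n:ℝ) + 1)} :=
        isOpen_lt hcq.abs continuous_const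
      obtain ⟨q, hq⟩ := Rat.denseRange_cast.exists_mem_open ho ⟨u, by
        simp only [mem_ofPred_eq, projIcc_of_mem hab hu, h0, abs_zero]; positivity⟩
      exact ⟨q, hq⟩
    · intro h
      obtain ⟨u, hu, hmin⟩ := isCompact_Icc.exists_isMinOn (nonempty_Icc.2 hab)
        ((hc ω).abs.continuousOn (s := Icc a b))
      refine ⟨u, hu, ?_⟩
      by_contra hne
      obtain ⟨n, hn⟩ := exists_nat_one_div_lt (abs_pos.2 hne)
      obtain ⟨q, hq⟩ := h n
      have := hmin (projIcc a b hab q).2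
      simp only [mem_ofPred_eq] at this
      linarith
  rw [key]
  refine MeasurableSet.iInter fun n => MeasurableSet.iUnion fun q => ?_
  have := hm _ (projIcc a b hab q).2
  exact this.abs measurableSet_Iio

lemma BMF.Zs_meas (hX : BMF P X G) {s t : ℝ} (hs : 0 ≤ s) (hst : s ≤ t) :
    MeasurableSet[G t] (Zs X s t) :=
  Imhof.Zs_meas hX.cont fun u hu => (hX.adapted u (hs.trans hu.1)).mono
    (hX.mono u t (hs.trans hu.1) hu.2) le_rfl

end Imhof

namespace Imhof
variable {Ω : Type*} [mΩ : MeasurableSpace Ω] {P : Measure Ω} [IsProbabilityMeasure P]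
  {X : ℝ → Ω → ℝ} {G : ℝ → MeasurableSpace Ω}

lemma gauss_symm {v : NNReal} {f : ℝ → ℝ≥0∞} (hf : Measurable f) :
    ∫⁻ y, f (-y) ∂gaussianReal 0 v = ∫⁻ y, f y ∂gaussianReal 0 v := by
  have h : (gaussianReal 0 v).map (fun y => -y) = gaussianReal 0 v := by
    rw [gaussianReal_map_neg]; simp
  conv_rhs => rw [← h]
  rw [lintegral_map hf measurable_neg]

lemma BMF.sym_step (hX : BMF P X G) {s t : ℝ} (hs : 0 ≤ s) (hst : s ≤ t) {A : Set Ω}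
    (hA : MeasurableSet[G s] A) {φ : ℝ → ℝ≥0∞} (hφ : Measurable φ) :
    ∫⁻ ω in A, φ (X t ω) ∂P = ∫⁻ ω in A, φ (2 * X s ω - X t ω) ∂P := by
  have h1 := hX.step hs hst hA (f := fun p => φ (p.1 + p.2)) (by fun_prop)
  have h2 := hX.step hs hst hA (f := fun p => φ (p.1 - p.2)) (by fun_prop)
  have e1 : ∀ ω, X s ω + (X t ω - X s ω) = X t ω := fun ω => by ring
  have e2 : ∀ ω, X s ω - (X t ω - X s ω) = 2 * X s ω - X t ω := fun ω => by ring
  simp only [e1] at h1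
  simp only [e2] at h2
  rw [h1, h2]
  refine lintegral_congr fun ω => ?_
  rw [← gauss_symm (by fun_prop)]
  simp [sub_eq_add_neg]

lemma disj_eq (f : ℕ → Set Ω) (k : ℕ) : disjointed f k = f k \ ⋃ j ∈ Finset.Iio k, f j := by
  rw [disjointed_apply, Finset.sup_set_eq_biUnion]

/-- grid -/
noncomputable def uu (s T : ℝ) (n k : ℕ) : ℝ := min T (s + (T - s) * k / (n + 1))

lemma uu_mono {s T : ℝ} (hsT : s ≤ T) (n : ℕ) : Monotone (uu s T n) := by
  intro i j hij
  unfold uu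
  have : (i:ℝ) ≤ j := by exact_mod_cast hij
  have h : 0 ≤ T - s := by linarith
  gcongr

lemma uu_zero {s T : ℝ} (hsT : s ≤ T) (n : ℕ) : uu s T n 0 = s := by
  simp [uu, hsT]

lemma uu_le {s T : ℝ} (n k : ℕ) : uu s T n k ≤ T := min_le_left _ _

lemma le_uu {s T : ℝ} (hsT : s ≤ T) (n k : ℕ) : s ≤ uu s T n k := by
  have := uu_mono hsT n (Nat.zero_le k)
  rwa [uu_zero hsT] at this

lemma uu_last {s T : ℝ} (n : ℕ) : uu s T n (n+1) = T := by
  unfold uu; push_cast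
  rw [mul_div_cancel_right₀ _ (by positivity)]; simp

lemma uu_succ {s T : ℝ} (hsT : s ≤ T) (n k : ℕ) : uu s T n (k+1) ≤ uu s T n k + (T - s) / (n+1) := by
  unfold uu
  push_cast
  have h : 0 ≤ (T - s) / (n+1:ℝ) := div_nonneg (by linarith) (by positivity)
  rw [← min_add_add_right]
  refine le_min ((min_le_left _ _).trans (by linarith)) ((min_le_right _ _).trans (le_of_eq ?_))
  ring

lemma Zs_mono {a b c : ℝ} (h : b ≤ c) : Zs X a b ⊆ Zs X a c := by
  rintro ω ⟨u, hu, h0⟩; exact ⟨u, ⟨hu.1, hu.2.trans h⟩, h0⟩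

/-- small increments -/
lemma unif {f : ℝ → ℝ} (hf : Continuous f) (a b : ℝ) {ε : ℝ} (hε : 0 < ε) :
    ∃ δ > 0, ∀ x ∈ Icc a b, ∀ y ∈ Icc a b, |x - y| < δ → |f x - f y| < ε := by
  have := isCompact_Icc.uniformContinuousOn_of_continuous (hf.continuousOn (s := Icc a b))
  obtain ⟨δ, hδ, h⟩ := Metric.uniformContinuousOn_iff.1 this ε hε
  exact ⟨δ, hδ, fun x hx y hy hxy => h x hx y hy hxy⟩

lemma BMF.refl_bc (hX : BMF P X G) {s T : ℝ} (hs : 0 ≤ s) (hsT : s ≤ T) {A : Set Ω}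
    (hA : MeasurableSet[G s] A) (φ : BoundedContinuousFunction ℝ NNReal) :
    ∫⁻ ω in A ∩ Zs X s T, φ (X T ω) ∂P = ∫⁻ ω in A ∩ Zs X s T, φ (- X T ω) ∂P := by
  have hT := hs.trans hsT
  have hmT := hX.meas hT
  have hA' := hX.le s hs _ hA
  have hZ' := hX.le T hT _ (hX.Zs_meas hs hsT)
  have hφ : Measurable (fun x => (φ x : ℝ≥0∞)) := by
    have := φ.continuous.measurable; fun_prop
  set D : ℕ → ℕ → Set Ω := fun n k => Zs X s (uu s T n k) with hD
  have hDm : ∀ n k, MeasurableSet[G (uu s T n k)] (D n k) := fun n k =>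
    hX.Zs_meas hs (le_uu hsT n k)
  have hu0 : ∀ n k, 0 ≤ uu s T n k := fun n k => hs.trans (le_uu hsT n k)
  have hCm : ∀ n k, MeasurableSet[G (uu s T n k)] (disjointed (D n) k) := fun n k => by
    rw [disj_eq]
    refine (hDm n k).diff (Finset.measurableSet_biUnion _ fun j hj => ?_)
    exact hX.mono _ _ (hu0 n j) (uu_mono hsT n (Finset.mem_Iio.1 hj).le) _ (hDm n j)
  have hCm' : ∀ n k, MeasurableSet (disjointed (D n) k) := fun n k => hX.le _ (hu0 n k) _ (hCm n k)
  have hUn : ∀ n, ⋃ k, disjointed (D n) k = Zs X s T := fun n => by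
    rw [iUnion_disjointed]
    refine subset_antisymm (iUnion_subset fun k => Zs_mono (uu_le n k)) ?_
    refine subset_iUnion_of_subset (n+1) ?_
    simp [hD, uu_last]
  set Ψ : ℕ → Ω → ℝ≥0∞ := fun n ω =>
    ∑' k, (disjointed (D n) k).indicator (fun ω => (φ (2 * X (uu s T n k) ω - X T ω) : ℝ≥0∞)) ω with hΨ
  have hind : ∀ n k, Measurable ((disjointed (D n) k).indicator
      (fun ω => (φ (2 * X (uu s T n k) ω - X T ω) : ℝ≥0∞))) := fun n k => by
    refine Measurable.indicator ?_ (hCm' n k)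
    have := hX.meas (hu0 n k)
    exact hφ.comp (by fun_prop)
  have hval : ∀ n k ω, ω ∈ disjointed (D n) k → Ψ n ω = φ (2 * X (uu s T n k) ω - X T ω) := by
    intro n k ω hω
    simp only [hΨ]
    rw [tsum_eq_single k, indicator_of_mem hω]
    intro j hj
    exact indicator_of_notMem (fun hj' => disjoint_left.1 (disjoint_disjointed _ hj) hj' hω) _
  have h_intg : ∀ n, ∫⁻ ω in A ∩ Zs X s T, Ψ n ω ∂P = ∫⁻ ω in A ∩ Zs X s T, φ (X T ω) ∂P := by
    intro n
    have hdis : Pairwise (Function.onFun Disjoint fun k => A ∩ disjointed (D n) k) := fun i j hij =>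
      (disjoint_disjointed _ hij).mono inter_subset_right inter_subset_right
    rw [← hUn n, inter_iUnion, lintegral_iUnion (fun k => hA'.inter (hCm' n k)) hdis,
      lintegral_iUnion (fun k => hA'.inter (hCm' n k)) hdis]
    refine tsum_congr fun k => ?_
    rw [setLIntegral_congr_fun (hA'.inter (hCm' n k)) (fun ω hω => hval n k ω hω.2)]
    refine (hX.sym_step (hu0 n k) (uu_le n k) ?_ hφ).symm
    exact (hX.mono _ _ hs (le_uu hsT n k) _ hA).inter (hCm n k)
  have hlim : Tendsto (fun n => ∫⁻ ω in A ∩ Zs X s T, Ψ n ω ∂P) atTop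
      (nhds (∫⁻ ω in A ∩ Zs X s T, φ (- X T ω) ∂P)) := by
    refine tendsto_lintegral_of_dominated_convergence' (fun _ => (nndist φ 0 : ℝ≥0∞)) 
      (fun n => (Measurable.tsum (hind n)).aemeasurable) ?_ ?_ ?_
    · intro n
      refine (ae_restrict_iff' (hA'.inter hZ')).2 (ae_of_all _ fun ω hω => ?_)
      have : ω ∈ ⋃ k, disjointed (D n) k := by rw [hUn]; exact hω.2
      obtain ⟨k, hk⟩ := mem_iUnion.1 this
      rw [hval n k ω hk]
      have h5 := BoundedContinuousFunction.nndist_coe_le_nndist (f := φ) (g := 0)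
        (2 * X (uu s T n k) ω - X T ω)
      have h6 : nndist (φ (2 * X (uu s T n k) ω - X T ω)) 0 = φ (2 * X (uu s T n k) ω - X T ω) := by
        simp [NNReal.nndist_eq]
      have h7 : φ (2 * X (uu s T n k) ω - X T ω) ≤ nndist φ 0 := by
        rw [← h6]; exact h5
      exact ENNReal.coe_le_coe.2 h7
    · simp [ENNReal.mul_eq_top]
    · refine (ae_restrict_iff' (hA'.inter hZ')).2 (ae_of_all _ fun ω hω => ?_)
      have hex : ∀ n, ∃ k, ω ∈ disjointed (D n) k := fun n => by
        have : ω ∈ ⋃ k, disjointed (D n) k := by rw [hUn]; exact hω.2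
        exact mem_iUnion.1 this
      choose κ hκ using hex
      have hz : ∀ n, ∃ z ∈ Icc s T, X z ω = 0 ∧ |uu s T n (κ n) - z| ≤ (T - s) / (n+1) := by
        intro n
        have h1 := disjointed_subset _ _ (hκ n)
        obtain ⟨z, hz, hz0⟩ := h1
        refine ⟨z, ⟨hz.1, hz.2.trans (uu_le _ _)⟩, hz0, ?_⟩
        rw [abs_of_nonneg (by linarith [hz.2])]
        rcases hk : κ n with _ | j
        · rw [hk, uu_zero hsT] at *
          have : 0 ≤ (T - s) / (n+1:ℝ) := div_nonneg (by linarith) (by positivity)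
          linarith [hz.1]
        · have h2 : ω ∉ D n j := by
            intro h3
            have h4 := hκ n
            rw [hk] at h4
            rw [disj_eq] at h4
            exact h4.2 (mem_biUnion (Finset.mem_coe.2 (Finset.mem_Iio.2 (Nat.lt_succ_self j))) h3)
          have : uu s T n j < z := by
            by_contra hc
            exact h2 ⟨z, ⟨hz.1, not_lt.1 hc⟩, hz0⟩
          linarith [uu_succ hsT n j]
      have hX0 : Tendsto (fun n => X (uu s T n (κ n)) ω) atTop (nhds 0) := by
        rw [Metric.tendsto_atTop]
        intro ε hε
        obtain ⟨δ, hδ, hun⟩ := unif (hX.cont ω) s T hε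
        have ht : Tendsto (fun n : ℕ => (T - s) / ((n:ℝ)+1)) atTop (nhds 0) := by
          have := tendsto_one_div_add_atTop_nhds_zero_nat.const_mul (T - s)
          simpa [div_eq_mul_inv] using this
        obtain ⟨N, hN⟩ := eventually_atTop.1 (ht.eventually (gt_mem_nhds hδ))
        refine ⟨N, fun n hn => ?_⟩
        obtain ⟨z, hz, hz0, hzd⟩ := hz n
        have := hun _ ⟨le_uu hsT n (κ n), uu_le _ _⟩ z hz (hzd.trans_lt (hN n hn))
        simpa [hz0, dist_eq_norm] using this
      have : (fun n => Ψ n ω) = fun n => (φ (2 * X (uu s T n (κ n)) ω - X T ω) : ℝ≥0∞) :=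
        funext fun n => hval n _ ω (hκ n)
      rw [this]
      refine ENNReal.tendsto_coe.2 ((φ.continuous.tendsto _).comp ?_)
      have := (hX0.const_mul 2).sub_const (X T ω)
      simpa using this
  simp only [h_intg] at hlim
  exact tendsto_nhds_unique tendsto_const_nhds hlim

lemma BMF.refl (hX : BMF P X G) {s T : ℝ} (hs : 0 ≤ s) (hsT : s ≤ T) {A : Set Ω}
    (hA : MeasurableSet[G s] A) {φ : ℝ → ℝ≥0∞} (hφ : Measurable φ) :
    ∫⁻ ω in A ∩ Zs X s T, φ (X T ω) ∂P = ∫⁻ ω in A ∩ Zs X s T, φ (- X T ω) ∂P := by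
  have hmT := hX.meas (hs.trans hsT)
  have hmN : Measurable (fun ω => - X T ω) := hmT.neg
  have : (P.restrict (A ∩ Zs X s T)).map (X T) = (P.restrict (A ∩ Zs X s T)).map (fun ω => - X T ω) := by
    refine ext_of_forall_lintegral_eq_of_IsFiniteMeasure fun f => ?_
    have hf : Measurable (fun x => (f x : ℝ≥0∞)) := by
      have := f.continuous.measurable; fun_prop
    rw [lintegral_map hf hmT, lintegral_map hf hmN]
    exact hX.refl_bc hs hsT hA f
  rw [← lintegral_map hφ hmT, ← lintegral_map hφ hmN, this]

end Imhof

namespace Imhof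
variable {Ω : Type*} [mΩ : MeasurableSpace Ω] {P : Measure Ω} [IsProbabilityMeasure P]
  {X : ℝ → Ω → ℝ} {G : ℝ → MeasurableSpace Ω}

lemma pos_of_no_zero {f : ℝ → ℝ} (hf : Continuous f) {a b : ℝ} (hab : a ≤ b) (ha : 0 < f a)
    (h : ¬ ∃ u ∈ Icc a b, f u = 0) : 0 < f b := by
  by_contra hb
  have := intermediate_value_Icc' hab hf.continuousOn (show (0:ℝ) ∈ Icc (f b) (f a) from ⟨not_lt.1 hb, ha.le⟩)
  obtain ⟨u, hu, h0⟩ := this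
  exact h ⟨u, hu, h0⟩

lemma BMF.os_pos_bdd (hX : BMF P X G) {s T : ℝ} (hs : 0 ≤ s) (hsT : s < T) {A : Set Ω}
    (hA : MeasurableSet[G s] A) (hpos : ∀ ω ∈ A, 0 < X s ω) {h : ℝ → ℝ≥0∞} (hh : Measurable h)
    {C : ℝ≥0∞} (hC : C ≠ ∞) (hb : ∀ y, ENNReal.ofReal y * h y ≤ C) :
    ∫⁻ ω in A \ Zs X s T, ENNReal.ofReal (X T ω) * h (X T ω) ∂P
      = ∫⁻ ω in A, ENNReal.ofReal (X s ω) * KK (T - s) h (X s ω) ∂P := by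
  have hT := hs.trans hsT.le
  have hmT := hX.meas hT
  have hms := hX.meas hs
  have hA' := hX.le s hs _ hA
  have hZ' := hX.le T hT _ (hX.Zs_meas hs hsT.le)
  set φ : ℝ → ℝ≥0∞ := fun y => ENNReal.ofReal y * h y with hφd
  have hφ : Measurable φ := by fun_prop
  have h1 := lintegral_inter_add_sdiff (μ := P) (fun ω => φ (X T ω)) A hZ'
  have h2 := lintegral_inter_add_sdiff (μ := P) (fun ω => φ (- X T ω)) A hZ'
  have h3 : ∫⁻ ω in A \ Zs X s T, φ (- X T ω) ∂P = 0 := by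
    rw [setLIntegral_congr_fun (g := fun _ => 0) (hA'.diff hZ')]
    · simp
    · intro ω hω
      have := pos_of_no_zero (hX.cont ω) hsT.le (hpos ω hω.1) hω.2
      simp only [hφd]
      rw [ENNReal.ofReal_of_nonpos (by linarith), zero_mul]
  rw [h3, add_zero, ← hX.refl hs hsT.le hA hφ] at h2
  rw [h2] at h1
  have e : ∀ ω, X s ω + (X T ω - X s ω) = X T ω := fun ω => by ring
  have h4 := hX.step hs hsT.le hA (f := fun p => φ (p.1 + p.2)) (by fun_prop)
  have h5 := hX.step hs hsT.le hA (f := fun p => φ (-(p.1 + p.2))) (by fun_prop)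
  simp only [e] at h4 h5
  have h6 : ∫⁻ ω in A, ENNReal.ofReal (X s ω) * KK (T - s) h (X s ω) ∂P + ∫⁻ ω in A, φ (- X T ω) ∂P
      = ∫⁻ ω in A, φ (X T ω) ∂P := by
    rw [h4, h5, ← lintegral_add_left]
    · refine setLIntegral_congr_fun hA' fun ω hω => ?_
      exact KK_refl (sub_pos.2 hsT) hh (hpos ω hω)
    · have := KK_meas (T - s) hh
      fun_prop
  have hfin : ∫⁻ ω in A, φ (- X T ω) ∂P ≠ ∞ := by
    refine ne_top_of_le_ne_top ?_ (lintegral_mono (g := fun _ => C) fun ω => hb _)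
    simp [ENNReal.mul_eq_top, hC]
  rw [← h1, add_comm] at h6
  exact ((ENNReal.add_right_inj hfin).1 h6).symm

/-- truncation -/
noncomputable def trunc (h : ℝ → ℝ≥0∞) (n : ℕ) (r : ℝ) : ℝ≥0∞ := if r ≤ n then min (h r) n else 0

lemma trunc_meas {h : ℝ → ℝ≥0∞} (hh : Measurable h) (n : ℕ) : Measurable (trunc h n) :=
  Measurable.ite measurableSet_Iic (by fun_prop) measurable_const

lemma trunc_mono (h : ℝ → ℝ≥0∞) : Monotone (trunc h) := by
  intro n m hnm r
  unfold trunc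
  have : (n:ℝ) ≤ m := by exact_mod_cast hnm
  split_ifs with h1 h2
  · gcongr
  · exact absurd (h1.trans this) h2
  · exact zero_le
  · exact le_rfl

lemma trunc_sup (h : ℝ → ℝ≥0∞) (r : ℝ) : ⨆ n, trunc h n r = h r := by
  refine le_antisymm (iSup_le fun n => ?_) ?_
  · unfold trunc; split_ifs
    · exact min_le_left _ _
    · exact zero_le
  · obtain ⟨N, hN⟩ := exists_nat_ge r
    refine le_of_forall_lt fun c hc => ?_
    have hct : c ≠ ∞ := hc.ne_top
    obtain ⟨M, hM⟩ := ENNReal.exists_nat_gt hct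
    refine lt_of_lt_of_le ?_ (le_iSup _ (max N M))
    unfold trunc
    have hr : r ≤ ((max N M : ℕ) : ℝ) := hN.trans (by exact_mod_cast le_max_left _ _)
    rw [if_pos hr]
    refine lt_min hc (hM.trans_le (by exact_mod_cast le_max_right _ _))

lemma trunc_bdd (h : ℝ → ℝ≥0∞) (n : ℕ) (y : ℝ) : ENNReal.ofReal y * trunc h n y ≤ n * n := by
  unfold trunc
  split_ifs with h1
  · gcongr
    · rw [ENNReal.ofReal_le_iff_le_toReal (by simp)]; simpa using h1
    · exact min_le_right _ _
  · simp

lemma KK_trunc (t : ℝ) {h : ℝ → ℝ≥0∞} (hh : Measurable h) (x : ℝ) :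
    ⨆ n, KK t (trunc h n) x = KK t h x := by
  unfold KK
  rw [← lintegral_iSup]
  · refine lintegral_congr fun z => trunc_sup _ _
  · intro n
    have := trunc_meas hh n
    fun_prop
  · intro n m hnm z
    exact trunc_mono h hnm _

lemma KK_trunc_mono (t : ℝ) (h : ℝ → ℝ≥0∞) (x : ℝ) : Monotone fun n => KK t (trunc h n) x :=
  fun _ _ hnm => lintegral_mono fun _ => trunc_mono h hnm _

lemma BMF.os_pos (hX : BMF P X G) {s T : ℝ} (hs : 0 ≤ s) (hsT : s < T) {A : Set Ω}
    (hA : MeasurableSet[G s] A) (hpos : ∀ ω ∈ A, 0 < X s ω) {h : ℝ → ℝ≥0∞} (hh : Measurable h) :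
    ∫⁻ ω in A \ Zs X s T, ENNReal.ofReal (X T ω) * h (X T ω) ∂P
      = ∫⁻ ω in A, ENNReal.ofReal (X s ω) * KK (T - s) h (X s ω) ∂P := by
  have hmT := hX.meas (hs.trans hsT.le)
  have hms := hX.meas hs
  have key := fun n : ℕ => hX.os_pos_bdd hs hsT hA hpos (trunc_meas hh n) (C := n * n)
    (by simp [ENNReal.mul_eq_top]) (trunc_bdd h n)
  have h1 : ∫⁻ ω in A \ Zs X s T, ENNReal.ofReal (X T ω) * h (X T ω) ∂P
      = ⨆ n, ∫⁻ ω in A \ Zs X s T, ENNReal.ofReal (X T ω) * trunc h n (X T ω) ∂P := by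
    rw [← lintegral_iSup]
    · simp_rw [← ENNReal.mul_iSup, trunc_sup]
    · intro n
      have := trunc_meas hh n
      fun_prop
    · intro n m hnm ω
      exact mul_le_mul_right (trunc_mono h hnm _) _
  have h2 : ∫⁻ ω in A, ENNReal.ofReal (X s ω) * KK (T - s) h (X s ω) ∂P
      = ⨆ n, ∫⁻ ω in A, ENNReal.ofReal (X s ω) * KK (T - s) (trunc h n) (X s ω) ∂P := by
    rw [← lintegral_iSup]
    · simp_rw [← ENNReal.mul_iSup, KK_trunc _ hh]
    · intro n
      have := KK_meas (T - s) (trunc_meas hh n)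
      fun_prop
    · intro n m hnm ω
      exact mul_le_mul_right (KK_trunc_mono _ h _ hnm) _
  rw [h1, h2]
  exact iSup_congr key

lemma Zs_neg (a b : ℝ) : Zs (fun t ω => - X t ω) a b = Zs X a b := by
  ext ω; simp [Zs]

lemma BMF.os_pos' (hX : BMF P X G) {s T : ℝ} (hs : 0 ≤ s) (hsT : s < T) {A : Set Ω}
    (hA : MeasurableSet[G s] A) (hpos : ∀ ω ∈ A, 0 < X s ω) {h : ℝ → ℝ≥0∞} (hh : Measurable h) :
    ∫⁻ ω in A \ Zs X s T, ENNReal.ofReal |X T ω| * h |X T ω| ∂P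
      = ∫⁻ ω in A, ENNReal.ofReal |X s ω| * KK (T - s) h |X s ω| ∂P := by
  have hT := hs.trans hsT.le
  have hA' := hX.le s hs _ hA
  have hZ' := hX.le T hT _ (hX.Zs_meas hs hsT.le)
  rw [setLIntegral_congr_fun (g := fun ω => ENNReal.ofReal (X T ω) * h (X T ω)) (hA'.diff hZ'),
    setLIntegral_congr_fun (s := A)
      (g := fun ω => ENNReal.ofReal (X s ω) * KK (T - s) h (X s ω)) hA',
    hX.os_pos hs hsT hA hpos hh]
  · intro ω hω
    simp only [abs_of_pos (hpos ω hω)]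
  · intro ω hω
    have := pos_of_no_zero (hX.cont ω) hsT.le (hpos ω hω.1) hω.2
    simp only [abs_of_pos this]

/-- One step h-transform. -/
lemma BMF.os (hX : BMF P X G) {s T : ℝ} (hs : 0 ≤ s) (hsT : s ≤ T) {A : Set Ω}
    (hA : MeasurableSet[G s] A) {h : ℝ → ℝ≥0∞} (hh : Measurable h) :
    ∫⁻ ω in A \ Zs X s T, ENNReal.ofReal |X T ω| * h |X T ω| ∂P
      = ∫⁻ ω in A, ENNReal.ofReal |X s ω| * KK (T - s) h |X s ω| ∂P := by
  have hT := hs.trans hsT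
  have hA' := hX.le s hs _ hA
  have hZ' := hX.le T hT _ (hX.Zs_meas hs hsT)
  have hms := hX.adapted s hs
  have hP : MeasurableSet[G s] {ω | 0 < X s ω} := hms measurableSet_Ioi
  have hN : MeasurableSet[G s] {ω | X s ω < 0} := hms measurableSet_Iio
  have hP' := hX.le s hs _ hP
  have hN' := hX.le s hs _ hN
  have hz : ∀ f : Ω → ℝ≥0∞, ∀ B : Set Ω, MeasurableSet B → (∀ ω ∈ B, X s ω = 0 → f ω = 0) → 
      ∫⁻ ω in B, f ω ∂P = ∫⁻ ω in B ∩ {ω | 0 < X s ω}, f ω ∂P + ∫⁻ ω in B ∩ {ω | X s ω < 0}, f ω ∂P := by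
    intro f B hB h0
    rw [← lintegral_inter_add_sdiff f B hP']
    congr 1
    rw [← lintegral_inter_add_sdiff f (B \ {ω | 0 < X s ω}) hN']
    have e1 : (B \ {ω | 0 < X s ω}) ∩ {ω | X s ω < 0} = B ∩ {ω | X s ω < 0} := by
      ext ω; simp only [mem_inter_iff, Set.mem_sdiff, mem_ofPred_eq]; constructor
      · tauto
      · intro ⟨a, b⟩; exact ⟨⟨a, by linarith⟩, b⟩
    have e2 : ∫⁻ ω in (B \ {ω | 0 < X s ω}) \ {ω | X s ω < 0}, f ω ∂P = 0 := by
      rw [setLIntegral_congr_fun (g := fun _ => 0) ((hB.diff hP').diff hN')]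
      · simp
      · intro ω hω
        simp only [Set.mem_sdiff, mem_ofPred_eq, not_lt] at hω
        exact h0 ω hω.1.1 (le_antisymm hω.1.2 hω.2)
    rw [e1, e2, add_zero]
  rcases hsT.eq_or_lt with rfl | hlt
  · rw [sub_self, ← lintegral_inter_add_sdiff _ A hZ']
    simp only [KK_zero_time h (abs_nonneg _)]
    rw [setLIntegral_congr_fun (g := fun _ => 0) (hA'.inter hZ')]
    · simp
    · rintro ω ⟨_, u, hu, h0⟩
      have : u = s := le_antisymm hu.2 hu.1
      subst this
      simp [h0]
  · rw [hz _ (A \ Zs X s T) (hA'.diff hZ'), hz _ A hA']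
    · congr 1
      · have := hX.os_pos' hs hlt (A := A ∩ {ω | 0 < X s ω}) (hA.inter hP) (fun ω hω => hω.2) hh
        rw [← this]; congr 2; ext ω; simp only [mem_inter_iff, Set.mem_sdiff]; tauto
      · have := hX.neg.os_pos' hs hlt (A := A ∩ {ω | X s ω < 0}) (hA.inter hN) 
          (fun ω hω => neg_pos.2 hω.2) hh
        simp only [abs_neg, Zs_neg] at this
        rw [← this]; congr 2; ext ω; simp only [mem_inter_iff, Set.mem_sdiff]; tauto
    · intro ω _ h0; simp [h0]
    · intro ω hω h0
      exact absurd ⟨s, ⟨le_rfl, hsT⟩, h0⟩ hω.2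

end Imhof

namespace Imhof

/-- clamp a time to `[0,s]` -/
noncomputable def clamp (s u : ℝ) : ℝ := max 0 (min u s)

lemma clamp_nonneg (s u : ℝ) : 0 ≤ clamp s u := le_max_left _ _
lemma clamp_le {s : ℝ} (hs : 0 ≤ s) (u : ℝ) : clamp s u ≤ s := max_le hs (min_le_right _ _)
lemma clamp_of_mem {s u : ℝ} (h0 : 0 ≤ u) (h : u ≤ s) : clamp s u = u := by
  simp [clamp, h0, h]

lemma bm_pre {Ω : Type*} [MeasurableSpace Ω] {P : Measure Ω} {B : ℝ → Ω → ℝ}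
    (hB : IsStdBM P B) : IsPreBrownianReal (fun (t : NNReal) ω => B t ω) P := by
  refine HasIndepIncrements.isPreBrownianReal_of_hasLaw (fun t => ⟨(hB.measurable t).aemeasurable, ?_⟩) ?_
  · have := hB.gauss 0 t le_rfl t.2
    simpa [hB.start] using this
  · intro n t ht
    exact hB.indep n (fun i => (t i : ℝ)) (fun i => (t i).2) (fun i j hij => ht hij)

lemma bm_indep {Ω : Type*} [MeasurableSpace Ω] {P : Measure Ω} {B : ℝ → Ω → ℝ}
    (hB : IsStdBM P B) {s t : ℝ} (hs : 0 ≤ s) (hst : s ≤ t) :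
    IndepFun (fun ω (u : ℝ) => B (clamp s u) ω) (fun ω => B t ω - B s ω) P := by
  have h := ((bm_pre hB).indepFun_shift s.toNNReal).symm
  have hm1 : Measurable (fun (p : Set.Iic s.toNNReal → ℝ) (u : ℝ) =>
      p ⟨(clamp s u).toNNReal, Real.toNNReal_le_toNNReal (clamp_le hs u)⟩) :=
    measurable_pi_lambda _ fun u => measurable_pi_apply _
  have hm2 : Measurable (fun (q : NNReal → ℝ) => q (t - s).toNNReal) := measurable_pi_apply _
  have h2 := h.comp hm1 hm2
  convert h2 using 1
  · ext ω u; simp [Real.coe_toNNReal _ (clamp_nonneg s u)]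
  · ext ω; simp [Real.coe_toNNReal _ hs, Real.coe_toNNReal _ (sub_nonneg.2 hst)]

lemma indep_bool {Ω 𝓧 : Type*} [MeasurableSpace Ω] [MeasurableSpace 𝓧] {P : Measure Ω}
    [IsProbabilityMeasure P] {f : Bool → Ω → 𝓧} (h : IndepFun (f true) (f false) P) :
    iIndepFun f P := by
  rw [iIndepFun_iff_measure_inter_preimage_eq_mul]
  intro S sets hS
  have hc : S = ∅ ∨ S = {true} ∨ S = {false} ∨ S = {true, false} := by
    clear hS; revert S; decide
  rcases hc with rfl | rfl | rfl | rfl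
  · simp
  · simp
  · simp
  · have := h.measure_inter_preimage_eq_mul (sets true) (sets false) (hS _ (by simp)) (hS _ (by simp))
    rw [show (⋂ i ∈ ({true, false} : Finset Bool), f i ⁻¹' sets i)
      = f true ⁻¹' sets true ∩ f false ⁻¹' sets false by ext; simp [and_comm], this]
    simp

variable {Ω : Type*} [MeasurableSpace Ω] {Q : Measure Ω} [IsProbabilityMeasure Q]
  {β : ℝ → Ω → E3}

noncomputable def pst (β : ℝ → Ω → E3) (s : ℝ) (ω : Ω) : Fin 3 → ℝ → ℝ := fun i u => β (clamp s u) ω i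

lemma pst_meas (hβ : IsStdBMVec 3 Q β) (s : ℝ) : Measurable (pst β s) :=
  measurable_pi_lambda _ fun i => measurable_pi_lambda _ fun u => (hβ.coord i).measurable _

lemma beta_meas (hβ : IsStdBMVec 3 Q β) (s : ℝ) : Measurable (β s) := by
  have : β s = fun ω => WithLp.toLp 2 (fun i => β s ω i) := by ext ω; rfl
  rw [this]
  have h : Measurable (fun ω => (fun i => β s ω i : Fin 3 → ℝ)) :=
    measurable_pi_lambda _ fun i => (hβ.coord i).measurable _
  exact (WithLp.measurable_toLp 2 _).comp h

lemma pst_indep (hβ : IsStdBMVec 3 Q β) {s t : ℝ} (hs : 0 ≤ s) (hst : s ≤ t) :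
    IndepFun (pst β s) (fun ω (i : Fin 3) => β t ω i - β s ω i) Q := by
  set X : Fin 3 → Bool → Ω → (ℝ → ℝ) := fun i b ω u =>
    if b then β (clamp s u) ω i else β t ω i - β s ω i with hXd
  have mX : ∀ i b, Measurable (X i b) := by
    intro i b
    have := (hβ.coord i).measurable
    refine measurable_pi_lambda _ fun u => ?_
    cases b
    · simpa [hXd, Pi.sub_def] using (this t).sub (this s)
    · simpa [hXd] using this _
  have h1 : iIndepFun (fun i ω => (X i · ω)) Q := by
    have := hβ.indepCoord.comp (g := fun i (p : ℝ → ℝ) (b : Bool) (u : ℝ) =>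
      if b then p (clamp s u) else p t - p s) (fun i => by
        refine measurable_pi_lambda _ fun b => measurable_pi_lambda _ fun u => ?_
        cases b <;> simp <;> fun_prop)
    exact this
  have h2 : ∀ i, iIndepFun (X i) Q := by
    intro i
    refine indep_bool ?_
    have := (bm_indep (hβ.coord i) hs hst).comp (φ := id) (ψ := fun y (_ : ℝ) => y) measurable_id
      (by fun_prop)
    exact this
  have h3 := iIndepFun_uncurry' mX h1 h2
  have h4 := h3.indepFun_finset (Finset.univ ×ˢ {true}) (Finset.univ ×ˢ {false}) (by
    rw [Finset.disjoint_left]; rintro ⟨i, b⟩; simp +contextual) (fun p => mX _ _)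
  have hm1 : Measurable (fun (q : ((Finset.univ ×ˢ {true} : Finset (Fin 3 × Bool))) → ℝ → ℝ)
      (i : Fin 3) => q ⟨(i, true), by simp⟩) := measurable_pi_lambda _ fun i => measurable_pi_apply _
  have hm2 : Measurable (fun (q : ((Finset.univ ×ˢ {false} : Finset (Fin 3 × Bool))) → ℝ → ℝ)
      (i : Fin 3) => q ⟨(i, false), by simp⟩ 0) := measurable_pi_lambda _ fun i =>
        (measurable_pi_apply (0:ℝ)).comp (measurable_pi_apply _)
  have h5 := h4.comp hm1 hm2
  have e1 : pst β s = (fun (q : ((Finset.univ ×ˢ {true} : Finset (Fin 3 × Bool))) → ℝ → ℝ)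
      (i : Fin 3) => q ⟨(i, true), by simp⟩) ∘ 
      (fun a (i : (Finset.univ ×ˢ {true} : Finset (Fin 3 × Bool))) => X i.1.1 i.1.2 a) := by
    funext ω i u; simp [hXd, pst]
  have e2 : (fun ω (i : Fin 3) => β t ω i - β s ω i) = 
      (fun (q : ((Finset.univ ×ˢ {false} : Finset (Fin 3 × Bool))) → ℝ → ℝ)
      (i : Fin 3) => q ⟨(i, false), by simp⟩ 0) ∘ 
      (fun a (i : (Finset.univ ×ˢ {false} : Finset (Fin 3 × Bool))) => X i.1.1 i.1.2 a) := by
    funext ω i; simp [hXd]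
  rw [e1, e2]
  exact h5

lemma incr_law (hβ : IsStdBMVec 3 Q β) {s t : ℝ} (hs : 0 ≤ s) (hst : s ≤ t) {g : E3 → ℝ≥0∞}
    (hg : Measurable g) :
    ∫⁻ y, g (WithLp.toLp 2 y) ∂(Q.map (fun ω (i : Fin 3) => β t ω i - β s ω i))
     = ∫⁻ z, g (√(t-s) • z) ∂(stdGaussian E3) := by
  have hmi : ∀ i, Measurable (fun ω => β t ω i - β s ω i) := fun i =>
    ((hβ.coord i).measurable _).sub ((hβ.coord i).measurable _)
  have h1 : iIndepFun (fun i ω => β t ω i - β s ω i) Q :=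
    hβ.indepCoord.comp (g := fun i (p : ℝ → ℝ) => p t - p s) (fun i => by fun_prop)
  rw [(iIndepFun_iff_map_fun_eq_pi_map (fun i => (hmi i).aemeasurable)).1 h1]
  have h2 : (fun i : Fin 3 => Q.map (fun ω => β t ω i - β s ω i))
      = fun i => (gaussianReal 0 1).map (fun y => √(t-s) * y) := by
    funext i
    rw [(hβ.coord i).gauss s t hs hst, gaussianReal_map_const_mul]
    congr 1
    · simp
    · ext; simp [Real.sq_sqrt (sub_nonneg.2 hst), sub_nonneg.2 hst]
  have inst : ∀ i : Fin 3, IsProbabilityMeasure ((gaussianReal 0 1).map (fun y => √(t-s) * y)) :=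
    fun i => Measure.isProbabilityMeasure_map (by fun_prop)
  rw [h2, ← Measure.pi_map_pi (μ := fun _ : Fin 3 => gaussianReal 0 1)
    (f := fun _ y => √(t-s) * y) (fun i => by fun_prop), ← map_pi_eq_stdGaussian,
    lintegral_map (by fun_prop) (by fun_prop), lintegral_map (by fun_prop) (by fun_prop)]
  rfl

lemma bes_markov (hβ : IsStdBMVec 3 Q β) {s T : ℝ} (hs : 0 ≤ s) (hsT : s ≤ T)
    {h : ℝ → ℝ≥0∞} (hh : Measurable h) (x : ℝ) {E : Set (Fin 3 → ℝ → ℝ)} (hE : MeasurableSet E) :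
    ∫⁻ ω in (pst β s) ⁻¹' E, h ‖x • e0 + β T ω‖ ∂Q
      = ∫⁻ ω in (pst β s) ⁻¹' E, KK (T - s) h ‖x • e0 + β s ω‖ ∂Q := by
  have hmp := pst_meas hβ s
  have hE' := hmp hE
  rw [← lintegral_indicator hE', ← lintegral_indicator hE']
  have hmi : Measurable (fun ω (i : Fin 3) => β T ω i - β s ω i) := measurable_pi_lambda _ fun i =>
    ((hβ.coord i).measurable _).sub ((hβ.coord i).measurable _)
  have key := freeze hmp hmi (pst_indep hβ hs hsT)
    (f := fun p => E.indicator (fun _ => (1:ℝ≥0∞)) p.1 *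
      h ‖x • e0 + (WithLp.toLp 2 (fun i => p.1 i s)) + WithLp.toLp 2 p.2‖) (by
      have h1 : Measurable (E.indicator (fun _ => (1:ℝ≥0∞))) := measurable_const.indicator hE
      have h2 : Measurable (fun p : (Fin 3 → ℝ → ℝ) × (Fin 3 → ℝ) => 
        (WithLp.toLp 2 (fun i => p.1 i s) : E3)) := (WithLp.measurable_toLp 2 _).comp (by fun_prop)
      have h3 : Measurable (fun p : (Fin 3 → ℝ → ℝ) × (Fin 3 → ℝ) => 
        (WithLp.toLp 2 p.2 : E3)) := (WithLp.measurable_toLp 2 _).comp (by fun_prop)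
      exact (h1.comp measurable_fst).mul (hh.comp ((measurable_const.add h2).add h3).norm))
  have e1 : ∀ ω, (WithLp.toLp 2 (fun i => pst β s ω i s) : E3) = β s ω := by
    intro ω; ext i; simp [pst, clamp_of_mem hs le_rfl]
  have e2 : ∀ ω, (WithLp.toLp 2 (fun i => β T ω i - β s ω i) : E3) = β T ω - β s ω := by
    intro ω; ext i; simp
  simp only [e1, e2] at key
  convert key using 1
  · refine lintegral_congr fun ω => ?_
    by_cases hω : pst β s ω ∈ E
    · simp [hω]
    · simp [hω]
  · refine lintegral_congr fun ω => ?_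
    rw [lintegral_const_mul _ (by
      have h3 : Measurable (fun p : (Fin 3 → ℝ) => 
        (WithLp.toLp 2 p : E3)) := (WithLp.measurable_toLp 2 _)
      exact hh.comp (measurable_const.add h3).norm), 
      incr_law hβ hs hsT (g := fun z => h ‖x • e0 + β s ω + z‖) (by fun_prop), KK_rot]
    by_cases hω : pst β s ω ∈ E
    · simp [hω]
    · simp [hω]

lemma beta_zero (hβ : IsStdBMVec 3 Q β) (ω : Ω) : β 0 ω = 0 := by
  ext i; simpa using (hβ.coord i).start ω

lemma bes_one (hβ : IsStdBMVec 3 Q β) {T : ℝ} (hT : 0 ≤ T)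
    {h : ℝ → ℝ≥0∞} (hh : Measurable h) {x : ℝ} (hx : 0 ≤ x) :
    ∫⁻ ω, h ‖x • e0 + β T ω‖ ∂Q = KK T h x := by
  have := bes_markov hβ le_rfl hT hh x MeasurableSet.univ
  simp only [preimage_univ, Measure.restrict_univ, beta_zero hβ, add_zero, sub_zero] at this
  rw [this]; simp [norm_smul, norm_e0, abs_of_nonneg hx]

end Imhof

namespace Imhof
variable {Ω : Type*} [mΩ : MeasurableSpace Ω] {P : Measure Ω} [IsProbabilityMeasure P]
  {X : ℝ → Ω → ℝ} {G : ℝ → MeasurableSpace Ω}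
variable {Ω' : Type*} [MeasurableSpace Ω'] {Q : Measure Ω'} [IsProbabilityMeasure Q]
  {β : ℝ → Ω' → E3}

lemma Zs_split {a b c : ℝ} (hab : a ≤ b) (hbc : b ≤ c) : Zs X a c = Zs X a b ∪ Zs X b c := by
  ext ω; constructor
  · rintro ⟨u, hu, h0⟩
    rcases le_total u b with h | h
    · exact Or.inl ⟨u, ⟨hu.1, h⟩, h0⟩
    · exact Or.inr ⟨u, ⟨h, hu.2⟩, h0⟩
  · rintro (⟨u, hu, h0⟩ | ⟨u, hu, h0⟩)
    · exact ⟨u, ⟨hu.1, hu.2.trans hbc⟩, h0⟩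
    · exact ⟨u, ⟨hab.trans hu.1, hu.2⟩, h0⟩

lemma fdd (hX : BMF P X G) (hβ : IsStdBMVec 3 Q β) {A : Set Ω} (hA : MeasurableSet[G 0] A)
    {B : ℝ → Set ℝ} (hB : ∀ s, MeasurableSet (B s)) (I : Finset ℝ) :
    (∀ s ∈ I, 0 ≤ s) → ∀ (T : ℝ), 0 ≤ T → (∀ s ∈ I, s ≤ T) → ∀ h : ℝ → ℝ≥0∞, Measurable h →
    ∫⁻ ω in (A ∩ {ω | ∀ s ∈ I, |X s ω| ∈ B s}) \ Zs X 0 T, ENNReal.ofReal |X T ω| * h |X T ω| ∂P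
     = ∫⁻ ω in A, ENNReal.ofReal |X 0 ω| *
        ∫⁻ ω' in {ω' | ∀ s ∈ I, ‖|X 0 ω| • e0 + β s ω'‖ ∈ B s}, h ‖|X 0 ω| • e0 + β T ω'‖ ∂Q ∂P := by
  have hA' := hX.le 0 le_rfl _ hA
  induction I using Finset.induction_on_max with
  | empty =>
    intro _ T hT _ h hh
    have := hX.os le_rfl hT hA hh
    simp only [Finset.notMem_empty, false_imp_iff, implies_true, ofPred_true, inter_univ,
      Measure.restrict_univ]
    rw [this]
    refine lintegral_congr fun ω => ?_
    rw [bes_one hβ hT hh (abs_nonneg _), sub_zero]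
  | insert a I hlt ih =>
    intro hI T hT hIT h hh
    have ha : 0 ≤ a := hI a (Finset.mem_insert_self _ _)
    have haT : a ≤ T := hIT a (Finset.mem_insert_self _ _)
    have hI0 : ∀ s ∈ I, 0 ≤ s := fun s hs => hI s (Finset.mem_insert_of_mem hs)
    have hcyl : ∀ (J : Finset ℝ), (∀ s ∈ J, 0 ≤ s) → (∀ s ∈ J, s ≤ a) →
        MeasurableSet[G a] {ω | ∀ s ∈ J, |X s ω| ∈ B s} := by
      intro J hJ hJa
      have : {ω | ∀ s ∈ J, |X s ω| ∈ B s} = ⋂ s ∈ J, {ω | |X s ω| ∈ B s} := by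
        ext; simp
      rw [this]
      refine Finset.measurableSet_biInter _ fun s hs => ?_
      have h1 : Measurable[G a] (X s) := (hX.adapted s (hJ s hs)).mono 
        (hX.mono _ _ (hJ s hs) (hJa s hs)) le_rfl
      exact (measurable_abs (α := ℝ)).comp h1 (hB s)
    have hIa : ∀ s ∈ insert a I, s ≤ a := by
      intro s hs
      rcases Finset.mem_insert.1 hs with rfl | hs
      · exact le_rfl
      · exact (hlt s hs).le
    have hZ := hX.Zs_meas le_rfl ha
    have hAG : MeasurableSet[G a] A := hX.mono 0 a le_rfl ha _ hA
    have h1 := hX.os ha haT (A := (A ∩ {ω | ∀ s ∈ insert a I, |X s ω| ∈ B s}) \ Zs X 0 a)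
      ((hAG.inter (hcyl _ hI hIa)).diff hZ) hh
    rw [Zs_split ha haT, ← sdiff_sdiff, h1]
    have hK := KK_meas (T - a) hh
    have h2 := ih hI0 a ha (fun s hs => (hlt s hs).le) ((B a).indicator (KK (T - a) h))
      (hK.indicator (hB a))
    have e1 : ∫⁻ ω in (A ∩ {ω | ∀ s ∈ insert a I, |X s ω| ∈ B s}) \ Zs X 0 a,
          ENNReal.ofReal |X a ω| * KK (T - a) h |X a ω| ∂P
        = ∫⁻ ω in (A ∩ {ω | ∀ s ∈ I, |X s ω| ∈ B s}) \ Zs X 0 a,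
          ENNReal.ofReal |X a ω| * (B a).indicator (KK (T - a) h) |X a ω| ∂P := by
      have m1 := hX.le a ha _ ((hAG.inter (hcyl _ hI hIa)).diff hZ)
      have m2 := hX.le a ha _ ((hAG.inter (hcyl _ hI0 (fun s hs => (hlt s hs).le))).diff hZ)
      rw [← lintegral_indicator m1, ← lintegral_indicator m2]
      refine lintegral_congr fun ω => ?_
      have hiff : ω ∈ (A ∩ {ω | ∀ s ∈ insert a I, |X s ω| ∈ B s}) \ Zs X 0 a ↔
          ω ∈ (A ∩ {ω | ∀ s ∈ I, |X s ω| ∈ B s}) \ Zs X 0 a ∧ |X a ω| ∈ B a := by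
        simp only [Set.mem_sdiff, mem_inter_iff, mem_ofPred_eq, Finset.forall_mem_insert]; tauto
      by_cases c1 : |X a ω| ∈ B a
      · by_cases c2 : ω ∈ (A ∩ {ω | ∀ s ∈ I, |X s ω| ∈ B s}) \ Zs X 0 a
        · rw [indicator_of_mem (hiff.2 ⟨c2, c1⟩), indicator_of_mem c2, indicator_of_mem c1]
        · rw [indicator_of_notMem (fun hc => c2 (hiff.1 hc).1), indicator_of_notMem c2]
      · rw [indicator_of_notMem (fun hc => c1 (hiff.1 hc).2)]
        simp [indicator, c1]
    rw [e1, h2]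
    refine lintegral_congr fun ω => ?_
    congr 1
    set x := |X 0 ω|
    set E : Set (Fin 3 → ℝ → ℝ) := {p | ∀ s ∈ insert a I, ‖x • e0 + WithLp.toLp 2 (fun i => p i s)‖ ∈ B s} with hE
    have hEm : MeasurableSet E := by
      have : E = ⋂ s ∈ insert a I, {p | ‖x • e0 + WithLp.toLp 2 (fun i => p i s)‖ ∈ B s} := by
        ext; simp [hE]
      rw [this]
      refine Finset.measurableSet_biInter _ fun s hs => ?_
      have h2 : Measurable (fun p : (Fin 3 → ℝ → ℝ) => 
        (WithLp.toLp 2 (fun i => p i s) : E3)) := (WithLp.measurable_toLp 2 _).comp (by fun_prop)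
      exact (measurable_const.add h2).norm (hB s)
    have hEp : pst β a ⁻¹' E = {ω' | ∀ s ∈ insert a I, ‖x • e0 + β s ω'‖ ∈ B s} := by
      ext ω'
      simp only [hE, mem_preimage, mem_ofPred_eq]
      refine forall₂_congr fun s hs => ?_
      have : (WithLp.toLp 2 (fun i => pst β a ω' i s) : E3) = β s ω' := by
        ext i; simp [pst, clamp_of_mem (hI s hs) (hIa s hs)]
      rw [this]
    have h3 := bes_markov hβ ha haT hh x hEm
    rw [hEp] at h3
    rw [h3]
    have hmb := beta_meas hβ
    have m3 : ∀ J : Finset ℝ, MeasurableSet {ω' | ∀ s ∈ J, ‖x • e0 + β s ω'‖ ∈ B s} := by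
      intro J
      have : {ω' | ∀ s ∈ J, ‖x • e0 + β s ω'‖ ∈ B s} = ⋂ s ∈ J, {ω' | ‖x • e0 + β s ω'‖ ∈ B s} := by
        ext; simp
      rw [this]
      refine Finset.measurableSet_biInter _ fun s hs => ?_
      exact (measurable_const.add (hmb s)).norm (hB s)
    rw [← lintegral_indicator (m3 _), ← lintegral_indicator (m3 _)]
    refine lintegral_congr fun ω' => ?_
    have hiff : ω' ∈ {ω' | ∀ s ∈ insert a I, ‖x • e0 + β s ω'‖ ∈ B s} ↔
        ω' ∈ {ω' | ∀ s ∈ I, ‖x • e0 + β s ω'‖ ∈ B s} ∧ ‖x • e0 + β a ω'‖ ∈ B a := by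
      simp only [mem_ofPred_eq, Finset.forall_mem_insert]; tauto
    by_cases c1 : ‖x • e0 + β a ω'‖ ∈ B a
    · by_cases c2 : ω' ∈ {ω' | ∀ s ∈ I, ‖x • e0 + β s ω'‖ ∈ B s}
      · rw [indicator_of_mem (hiff.2 ⟨c2, c1⟩), indicator_of_mem c2, indicator_of_mem c1]
      · rw [indicator_of_notMem c2, indicator_of_notMem (fun hc => c2 (hiff.1 hc).1)]
    · rw [indicator_of_notMem (fun hc => c1 (hiff.1 hc).2)]
      simp [indicator, c1]


/-- path of the shifted Bessel process -/
noncomputable def bp (β : ℝ → Ω' → E3) (x : ℝ) (ω' : Ω') : Icc (0:ℝ) 1 → ℝ :=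
  fun s => ‖x • e0 + β s ω'‖

noncomputable def Phi (Q : Measure Ω') (β : ℝ → Ω' → E3) (F : (Icc (0:ℝ) 1 → ℝ) → ℝ≥0∞) (x : ℝ) : ℝ≥0∞ :=
  ENNReal.ofReal x * ∫⁻ ω', ENNReal.ofReal (1 / ‖x • e0 + β 1 ω'‖) * F (bp β x ω') ∂Q

lemma path_id (hX : BMF P X G) (hβ : IsStdBMVec 3 Q β) {A : Set Ω} (hA : MeasurableSet[G 0] A)
    {F : (Icc (0:ℝ) 1 → ℝ) → ℝ≥0∞} (hF : Measurable F) :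
    ∫⁻ ω in A \ Zs X 0 1, F (fun s => |X s ω|) ∂P = ∫⁻ ω in A, Phi Q β F |X 0 ω| ∂P := by
  have hA' := hX.le 0 le_rfl _ hA
  have hZ' := hX.le 1 zero_le_one _ (hX.Zs_meas le_rfl zero_le_one)
  have hmb := beta_meas hβ
  have hm0 := hX.meas le_rfl
  have hmp : Measurable (fun ω (s : Icc (0:ℝ) 1) => |X s ω|) :=
    measurable_pi_lambda _ fun s => (hX.meas s.2.1).abs
  set ρ : Ω × Ω' → ℝ≥0∞ := fun p => ENNReal.ofReal |X 0 p.1| * 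
    ENNReal.ofReal (1 / ‖|X 0 p.1| • e0 + β 1 p.2‖) with hρd
  have hv : ∀ s, Measurable (fun p : Ω × Ω' => |X 0 p.1| • e0 + β s p.2) := fun s => by
    have := hmb s; fun_prop
  have hρ : Measurable ρ := by
    have := hv 1
    have h2 : Measurable (fun p : Ω × Ω' => ‖|X 0 p.1| • e0 + β 1 p.2‖) := this.norm
    fun_prop
  have hbp : Measurable (fun p : Ω × Ω' => bp β |X 0 p.1| p.2) :=
    measurable_pi_lambda _ fun s => (hv s).norm
  have key : (P.restrict (A \ Zs X 0 1)).map (fun ω (s : Icc (0:ℝ) 1) => |X s ω|)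
      = ((((P.restrict A).prod Q).withDensity ρ).map (fun p => bp β |X 0 p.1| p.2)) := by
    have hcyl : ∀ S ∈ squareCylinders (fun _ : Icc (0:ℝ) 1 => {s : Set ℝ | MeasurableSet s}),
        (P.restrict (A \ Zs X 0 1)).map (fun ω (s : Icc (0:ℝ) 1) => |X s ω|) S
        = ((((P.restrict A).prod Q).withDensity ρ).map (fun p => bp β |X 0 p.1| p.2)) S := by
      rintro S ⟨J, t, ht, rfl⟩
      have ht' : ∀ i, MeasurableSet (t i) := fun i => ht i (mem_univ i)
      have hS : MeasurableSet ((J : Set (Icc (0:ℝ) 1)).pi t) :=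
        MeasurableSet.pi J.countable_toSet fun i _ => ht' i
      set B : ℝ → Set ℝ := fun s => if h : s ∈ Icc (0:ℝ) 1 then t ⟨s, h⟩ else univ with hBd
      have hB : ∀ s, MeasurableSet (B s) := by
        intro s; simp only [hBd]; split_ifs
        · exact ht' _
        · exact MeasurableSet.univ
      have hBt : ∀ s : Icc (0:ℝ) 1, B s = t s := fun s => by simp only [hBd]; rw [dif_pos s.2]
      have hf := fdd hX hβ hA hB (J.map (Function.Embedding.subtype _)) (by
          intro s hs; obtain ⟨u, _, rfl⟩ := Finset.mem_map.1 hs; exact u.2.1) 1 zero_le_one (by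
          intro s hs; obtain ⟨u, _, rfl⟩ := Finset.mem_map.1 hs; exact u.2.2)
          (fun r => ENNReal.ofReal (1 / r)) (by fun_prop)
      have e1 : {ω | ∀ s ∈ J.map (Function.Embedding.subtype (· ∈ Icc (0:ℝ) 1)), |X s ω| ∈ B s}
          = (fun ω (s : Icc (0:ℝ) 1) => |X s ω|) ⁻¹' ((J : Set (Icc (0:ℝ) 1)).pi t) := by
        ext ω
        simp only [mem_ofPred_eq, mem_preimage, Set.mem_pi, Finset.mem_coe, Finset.forall_mem_map]
        exact forall₂_congr fun s hs => by rw [← hBt s]; rfl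
      have e2 : ∀ x : ℝ, {ω' | ∀ s ∈ J.map (Function.Embedding.subtype (· ∈ Icc (0:ℝ) 1)),
            ‖x • e0 + β s ω'‖ ∈ B s}
          = bp β x ⁻¹' ((J : Set (Icc (0:ℝ) 1)).pi t) := by
        intro x
        ext ω
        simp only [mem_ofPred_eq, mem_preimage, Set.mem_pi, Finset.mem_coe, Finset.forall_mem_map]
        exact forall₂_congr fun s hs => by rw [← hBt s]; rfl
      simp only [e2, e1] at hf
      rw [Measure.map_apply hmp hS, Measure.map_apply hbp hS, Measure.restrict_apply (hmp hS),
        withDensity_apply _ (hbp hS), ← lintegral_indicator (hbp hS),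
        lintegral_prod _ (hρ.indicator (hbp hS)).aemeasurable]
      have e3 : ∫⁻ ω in (A ∩ (fun ω (s : Icc (0:ℝ) 1) => |X s ω|) ⁻¹' ((J : Set (Icc (0:ℝ) 1)).pi t))
          \ Zs X 0 1, ENNReal.ofReal |X 1 ω| * ENNReal.ofReal (1 / |X 1 ω|) ∂P
          = P ((fun ω (s : Icc (0:ℝ) 1) => |X s ω|) ⁻¹' ((J : Set (Icc (0:ℝ) 1)).pi t) ∩ (A \ Zs X 0 1)) := by
        rw [setLIntegral_congr_fun (g := fun _ => 1) ((hA'.inter (hmp hS)).diff hZ')]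
        · rw [setLIntegral_one]; congr 1; ext ω; simp only [mem_inter_iff, Set.mem_sdiff]; tauto
        · intro ω hω
          have : X 1 ω ≠ 0 := fun h0 => hω.2 ⟨1, ⟨zero_le_one, le_rfl⟩, h0⟩
          have h3 : 0 < |X 1 ω| := abs_pos.2 this
          simp only
          rw [← ENNReal.ofReal_mul h3.le, mul_one_div_cancel h3.ne', ENNReal.ofReal_one]
      rw [← e3, hf]
      refine lintegral_congr fun ω => ?_
      have hbx : Measurable (bp β |X 0 ω|) := measurable_pi_lambda _ fun s =>
        (measurable_const.add (hmb s)).norm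
      have hm1 : Measurable (fun ω' => ENNReal.ofReal (1 / ‖|X 0 ω| • e0 + β 1 ω'‖)) := by
        have : Measurable (fun ω' => ‖|X 0 ω| • e0 + β 1 ω'‖) := (measurable_const.add (hmb 1)).norm
        fun_prop
      rw [← lintegral_indicator (hbx hS), ← lintegral_const_mul _ (hm1.indicator (hbx hS))]
      refine lintegral_congr fun ω' => ?_
      by_cases hc : bp β |X 0 ω| ω' ∈ ((J : Set (Icc (0:ℝ) 1)).pi t)
      · rw [indicator_of_mem (show ω' ∈ bp β |X 0 ω| ⁻¹' ((J : Set (Icc (0:ℝ) 1)).pi t) from hc), indicator_of_mem (by exact hc)]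
      · rw [indicator_of_notMem (show ω' ∉ bp β |X 0 ω| ⁻¹' ((J : Set (Icc (0:ℝ) 1)).pi t) from hc), indicator_of_notMem (by exact hc), mul_zero]
    refine ext_of_generate_finite _ generateFrom_squareCylinders.symm
      (isPiSystem_squareCylinders (fun _ => MeasurableSpace.isPiSystem_measurableSet) (by simp)) hcyl
      (hcyl univ ⟨∅, fun _ => univ, by simp, by simp⟩)
  have hFb : Measurable (fun p : Ω × Ω' => F (bp β |X 0 p.1| p.2)) := hF.comp hbp
  rw [← lintegral_map (μ := P.restrict (A \ Zs X 0 1)) hF hmp, key, lintegral_map hF hbp,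
    lintegral_withDensity_eq_lintegral_mul _ hρ hFb, lintegral_prod _ (hρ.mul hFb).aemeasurable]
  refine lintegral_congr fun ω => ?_
  unfold Phi
  rw [← lintegral_const_mul]
  · refine lintegral_congr fun ω' => ?_
    simp only [Pi.mul_apply, hρd, mul_assoc]
  · have : Measurable (fun ω' => ‖|X 0 ω| • e0 + β 1 ω'‖) := (measurable_const.add (hmb 1)).norm
    have hbx : Measurable (bp β |X 0 ω|) := measurable_pi_lambda _ fun s =>
        (measurable_const.add (hmb s)).norm
    have := hF.comp hbx
    fun_prop

end Imhof

namespace Imhof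
open scoped Topology
variable {Ω : Type*} [mΩ : MeasurableSpace Ω] {P : Measure Ω} [IsProbabilityMeasure P]
  {W : ℝ → Ω → ℝ}
variable {Ω' : Type*} [MeasurableSpace Ω'] {Q : Measure Ω'} [IsProbabilityMeasure Q]
  {β : ℝ → Ω' → E3}

noncomputable def Xs (W : ℝ → Ω → ℝ) (a : ℝ) (s : ℝ) (ω : Ω) : ℝ := W (a + s * (1 - a)) ω / √(1 - a)

/-- its filtration -/
@[reducible] noncomputable def Gs (W : ℝ → Ω → ℝ) (a : ℝ) (s : ℝ) : MeasurableSpace Ω :=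
  MeasurableSpace.comap (fun ω (u : ℝ) => W (clamp (a + s * (1 - a)) u) ω) inferInstance

lemma Gs_meas {a s u : ℝ} (h0 : 0 ≤ u) (hu : u ≤ a + s * (1 - a)) : Measurable[Gs W a s] (W u) := by
  have h : Measurable[Gs W a s] (fun ω (u : ℝ) => W (clamp (a + s * (1 - a)) u) ω) :=
    comap_measurable _
  have h2 := (measurable_pi_apply (X := fun _ : ℝ => ℝ) u).comp h
  convert h2 using 1
  ext ω; simp [clamp_of_mem h0 hu]

lemma Xs_bmf (hW : IsStdBM P W) {a : ℝ} (ha : 0 ≤ a) (ha1 : a < 1) : BMF P (Xs W a) (Gs W a) where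
  le s hs := by
    apply Measurable.comap_le
    exact measurable_pi_lambda _ fun u => hW.measurable _
  mono s t hs hst := by
    apply Measurable.comap_le
    refine @measurable_pi_lambda _ _ _ (Gs W a t) _ _ fun u => ?_
    refine Gs_meas (clamp_nonneg _ _) ((clamp_le (by nlinarith) u).trans ?_)
    nlinarith
  adapted s hs := by
    unfold Xs
    exact (Gs_meas (by nlinarith) le_rfl).div_const _
  cont ω := by
    unfold Xs
    exact ((hW.cont ω).comp (by fun_prop)).div_const _
  indep s t hs hst := by
    have h := bm_indep hW (s := a + s * (1 - a)) (t := a + t * (1 - a)) (by nlinarith) (by nlinarith)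
    rw [IndepFun_iff_Indep] at h
    refine indep_of_indep_of_le_right h ?_
    apply Measurable.comap_le
    have h1 : Measurable[MeasurableSpace.comap (fun ω => W (a + t * (1 - a)) ω - W (a + s * (1 - a)) ω) inferInstance]
      (fun ω => W (a + t * (1 - a)) ω - W (a + s * (1 - a)) ω) := comap_measurable _
    have h2 := h1.div_const (√(1 - a))
    convert h2 using 1
    ext ω; simp only [Xs]; ring
  law s t hs hst := by
    have h := hW.gauss (a + s * (1 - a)) (a + t * (1 - a)) (by nlinarith) (by nlinarith)
    have e : (fun ω => Xs W a t ω - Xs W a s ω) =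
      (fun y => y / √(1 - a)) ∘ (fun ω => W (a + t * (1 - a)) ω - W (a + s * (1 - a)) ω) := by
      ext ω; simp only [Xs, Function.comp]; ring
    rw [e, ← Measure.map_map (by fun_prop) (show Measurable fun ω => W (a + t * (1 - a)) ω - W (a + s * (1 - a)) ω from (hW.measurable _).sub (hW.measurable _)), h,
      gaussianReal_map_div_const]
    have h1 : 0 < 1 - a := by linarith
    congr 1
    · simp
    · ext
      push_cast
      rw [Real.coe_toNNReal _ (by nlinarith), Real.coe_toNNReal _ (by nlinarith)]
      rw [Real.sq_sqrt h1.le]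
      field_simp
      ring

lemma Xs_Zs {a : ℝ} (ha1 : a < 1) : Zs (Xs W a) 0 1 = Zs W a 1 := by
  have h1 : 0 < 1 - a := by linarith
  have h2 : √(1 - a) ≠ 0 := (Real.sqrt_pos.2 h1).ne'
  ext ω; constructor
  · rintro ⟨u, hu, h0⟩
    refine ⟨a + u * (1 - a), ⟨by nlinarith [hu.1], by nlinarith [hu.2]⟩, ?_⟩
    simpa [Xs, h2] using h0
  · rintro ⟨u, hu, h0⟩
    refine ⟨(u - a) / (1 - a), ⟨div_nonneg (by linarith [hu.1]) h1.le, (div_le_one h1).2 (by linarith [hu.2])⟩, ?_⟩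
    simp only [Xs]
    rw [div_mul_cancel₀ _ h1.ne']; simp [h0]

lemma lz_great (hW : IsStdBM P W) (ω : Ω) :
    IsGreatest {t ∈ Icc (0:ℝ) 1 | W t ω = 0} (lastZero W ω) := by
  have hcl : IsClosed {t ∈ Icc (0:ℝ) 1 | W t ω = 0} :=
    isClosed_Icc.inter (isClosed_eq (hW.cont ω) continuous_const)
  have hbd : BddAbove {t ∈ Icc (0:ℝ) 1 | W t ω = 0} := ⟨1, fun t ht => ht.1.2⟩
  have hne : ({t ∈ Icc (0:ℝ) 1 | W t ω = 0}).Nonempty := ⟨0, ⟨le_rfl, zero_le_one⟩, hW.start ω⟩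
  exact ⟨hcl.csSup_mem hne hbd, fun t ht => le_csSup hbd ht⟩

/-- grid points -/
noncomputable def tg (N j : ℕ) : ℝ := ((j : ℝ) + 1) / ((N : ℝ) + 1)

/-- grid event -/
def Ag (W : ℝ → Ω → ℝ) (N j : ℕ) : Set Ω := Zs W ((j : ℝ) / ((N : ℝ) + 1)) (tg N j)

/-- grid event: last zero in the grid cell -/
def Dg (W : ℝ → Ω → ℝ) (N j : ℕ) : Set Ω := Ag W N j \ Zs W (tg N j) 1

lemma tg_pos (N j : ℕ) : 0 < tg N j := by unfold tg; positivity
lemma tg_lt {N j : ℕ} (h : j < N) : tg N j < 1 := by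
  unfold tg; rw [div_lt_one (by positivity)]
  have : (j:ℝ) < N := by exact_mod_cast h
  linarith

lemma Dg_iff (hW : IsStdBM P W) {N j : ℕ} (h : j < N) (ω : Ω) :
    ω ∈ Dg W N j ↔ ⌊lastZero W ω * (N + 1)⌋₊ = j := by
  have hg := lz_great hW ω
  have hN : (0:ℝ) < (N:ℝ) + 1 := by positivity
  have e : (⌊lastZero W ω * (N + 1)⌋₊ = j) ↔ ((j : ℝ) / ((N : ℝ) + 1) ≤ lastZero W ω ∧ lastZero W ω < tg N j) := by
    rw [Nat.floor_eq_iff (mul_nonneg hg.1.1.1 hN.le), div_le_iff₀ hN, tg, lt_div_iff₀ hN]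
  rw [e]
  have h0 : (0:ℝ) ≤ (j : ℝ) / ((N : ℝ) + 1) := by positivity
  have h1 := tg_lt h
  have h2 := tg_pos N j
  constructor
  · rintro ⟨⟨u, hu, h3⟩, h4⟩
    refine ⟨hu.1.trans (hg.2 ⟨⟨h0.trans hu.1, hu.2.trans h1.le⟩, h3⟩), ?_⟩
    by_contra hc
    exact h4 ⟨_, ⟨not_lt.1 hc, hg.1.1.2⟩, hg.1.2⟩
  · rintro ⟨h3, h4⟩
    refine ⟨⟨_, ⟨h3, h4.le⟩, hg.1.2⟩, ?_⟩
    rintro ⟨u, hu, h5⟩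
    have := hg.2 ⟨⟨h2.le.trans hu.1, hu.2⟩, h5⟩
    linarith [hu.1]

lemma sum_zero {E : Type*} [AddCommMonoid E] (hW : IsStdBM P W) (φ : ℝ → Ω → E) (N : ℕ) {ω : Ω}
    (h1 : lastZero W ω = 1) :
    ∑ j ∈ Finset.range N, (Dg W N j).indicator (φ (tg N j)) ω = 0 := by
  refine Finset.sum_eq_zero fun j hj => indicator_of_notMem ?_ _
  rw [Dg_iff hW (Finset.mem_range.1 hj), h1]
  have : ⌊(1:ℝ) * (N + 1)⌋₊ = N + 1 := by
    rw [one_mul]; exact_mod_cast Nat.floor_natCast (N + 1)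
  rw [this]; have := Finset.mem_range.1 hj; omega

lemma sum_conv {E : Type*} [AddCommMonoid E] [TopologicalSpace E] (hW : IsStdBM P W) (φ : ℝ → Ω → E) {ω : Ω}
    (h1 : lastZero W ω < 1) {y : E} (hφ : Tendsto (fun a => φ a ω) (𝓝 (lastZero W ω)) (𝓝 y)) :
    Tendsto (fun N => ∑ j ∈ Finset.range N, (Dg W N j).indicator (φ (tg N j)) ω) atTop (𝓝 y) := by
  have hg0 := (lz_great hW ω).1.1.1
  set g := lastZero W ω with hgd
  have hlim : Tendsto (fun N : ℕ => tg N ⌊g * (N + 1)⌋₊) atTop (𝓝 g) := by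
    have h2 : Tendsto (fun N : ℕ => g + 1 / ((N:ℝ) + 1)) atTop (𝓝 g) := by
      simpa using tendsto_const_nhds (x := g).add (tendsto_one_div_add_atTop_nhds_zero_nat (𝕜 := ℝ))
    refine tendsto_of_tendsto_of_tendsto_of_le_of_le tendsto_const_nhds h2 ?_ ?_
    · intro N
      have hN : (0:ℝ) < (N:ℝ) + 1 := by positivity
      simp only [tg]; rw [le_div_iff₀ hN]; exact (Nat.lt_floor_add_one _).le
    · intro N
      have hN : (0:ℝ) < (N:ℝ) + 1 := by positivity
      simp only [tg]; rw [div_le_iff₀ hN, add_mul, one_div_mul_cancel hN.ne']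
      have := Nat.floor_le (mul_nonneg hg0 hN.le)
      linarith
  refine (hφ.comp hlim).congr' ?_
  filter_upwards [hlim.eventually (eventually_lt_nhds h1)] with N hN
  have hlt : ⌊g * (N + 1)⌋₊ < N := by
    have hN' : (0:ℝ) < (N:ℝ) + 1 := by positivity
    simp only [tg] at hN; rw [div_lt_one hN'] at hN
    have : ((⌊g * (N + 1)⌋₊ : ℕ) : ℝ) < N := by linarith
    exact_mod_cast this
  rw [Finset.sum_eq_single ⌊g * (N + 1)⌋₊]
  · rw [indicator_of_mem ((Dg_iff hW hlt ω).2 rfl)]; rfl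
  · intro j hj hne
    exact indicator_of_notMem (fun hc => hne ((Dg_iff hW (Finset.mem_range.1 hj) ω).1 hc).symm) _
  · intro hc; exact absurd (Finset.mem_range.2 hlt) hc

/-- meander path with start time `a` -/
noncomputable def Mp (W : ℝ → Ω → ℝ) (a : ℝ) (ω : Ω) : Icc (0:ℝ) 1 → ℝ :=
  fun s => |W (a + s * (1 - a)) ω| / √(1 - a)

lemma Mp_eq (a : ℝ) (ω : Ω) : Mp W a ω = fun s : Icc (0:ℝ) 1 => |Xs W a s ω| := by
  ext s; simp [Mp, Xs, abs_div, abs_of_nonneg (Real.sqrt_nonneg _)]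

lemma Mp_meas (hW : IsStdBM P W) (a : ℝ) : Measurable (Mp W a) :=
  measurable_pi_lambda _ fun s => ((hW.measurable _).abs).div_const _

lemma Mp_tend (hW : IsStdBM P W) (ω : Ω) {g : ℝ} (hg : g < 1) :
    Tendsto (fun a => Mp W a ω) (𝓝 g) (𝓝 (Mp W g ω)) := by
  rw [tendsto_pi_nhds]
  intro s
  have h1 : √(1 - g) ≠ 0 := (Real.sqrt_pos.2 (by linarith)).ne'
  have hc := hW.cont ω
  have : ContinuousAt (fun a => |W (a + s * (1 - a)) ω| / √(1 - a)) g := by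
    refine ContinuousAt.div ?_ (by fun_prop) h1
    exact ((hc.comp (by fun_prop : Continuous fun a : ℝ => a + s * (1 - a))).abs).continuousAt
  exact this

lemma Zs_meas0 (hW : IsStdBM P W) (a b : ℝ) : MeasurableSet (Zs W a b) :=
  Zs_meas hW.cont fun u _ => hW.measurable u

lemma Dg_meas (hW : IsStdBM P W) (N j : ℕ) : MeasurableSet (Dg W N j) :=
  (Zs_meas0 hW _ _).diff (Zs_meas0 hW _ _)

/-- the meander path is measurable -/
lemma mp_meas (hW : IsStdBM P W) : Measurable (fun ω => Mp W (lastZero W ω) ω) := by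
  refine measurable_pi_lambda _ fun s => ?_
  refine measurable_of_tendsto_metrizable (f := fun N ω =>
    ∑ j ∈ Finset.range N, (Dg W N j).indicator (fun ω => Mp W (tg N j) ω s) ω) ?_ ?_
  · intro N
    exact Finset.measurable_sum _ fun j _ =>
      ((measurable_pi_apply s).comp (Mp_meas hW _)).indicator (Dg_meas hW N j)
  · rw [tendsto_pi_nhds]
    intro ω
    rcases (lz_great hW ω).1.1.2.lt_or_eq with h | h
    · exact sum_conv hW (fun a ω => Mp W a ω s) h ((tendsto_pi_nhds.1 (Mp_tend hW ω h)) s)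
    · have e := fun N => sum_zero hW (fun a ω => Mp W a ω s) N h
      simp only [e]
      have : Mp W (lastZero W ω) ω s = 0 := by simp [Mp, h]
      rw [this]; exact tendsto_const_nhds

lemma lz_ae (hW : IsStdBM P W) : ∀ᵐ ω ∂P, lastZero W ω < 1 := by
  have h := hW.gauss 0 1 le_rfl zero_le_one
  simp only [hW.start, sub_zero] at h
  have hna : NullSingletonClass (gaussianReal 0 (Real.toNNReal 1)) := nullSingletonClass_gaussianReal (by simp)
  have h0 : P (W 1 ⁻¹' {0}) = 0 := by
    have : P.map (fun ω => W 1 ω) {0} = 0 := by rw [h]; exact measure_singleton 0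
    rwa [Measure.map_apply (hW.measurable 1) (measurableSet_singleton 0)] at this
  rw [ae_iff]
  refine measure_mono_null ?_ h0
  intro ω hω
  have hg := lz_great hW ω
  have : lastZero W ω = 1 := le_antisymm hg.1.1.2 (not_lt.1 hω)
  have h2 := hg.1.2
  rw [this] at h2
  exact h2

lemma fatou (hβ : IsStdBMVec 3 Q β) {f : (Icc (0:ℝ) 1 → ℝ) → NNReal} (hf : Continuous f) (hfm : Measurable f)
    {l : ℝ≥0∞} (hl : l < ∫⁻ ω', ENNReal.ofReal (1 / ‖β 1 ω'‖) * f (bp β 0 ω') ∂Q) :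
    ∃ δ > 0, ∀ x, 0 < x → x ≤ δ →
      l ≤ ∫⁻ ω', ENNReal.ofReal (1 / ‖x • e0 + β 1 ω'‖) * f (bp β x ω') ∂Q := by
  by_contra! hc
  choose x hx0 hx1 hx2 using fun n : ℕ => hc (1 / ((n:ℝ) + 1)) (by positivity)
  have hx : Tendsto x atTop (𝓝 0) :=
    tendsto_of_tendsto_of_tendsto_of_le_of_le tendsto_const_nhds
      (tendsto_one_div_add_atTop_nhds_zero_nat (𝕜 := ℝ)) (fun n => (hx0 n).le) hx1
  have hmb := beta_meas hβ
  have hm : ∀ n, Measurable (fun ω' => ENNReal.ofReal (1 / ‖x n • e0 + β 1 ω'‖) * (f (bp β (x n) ω') : ℝ≥0∞)) := by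
    intro n
    have h1 : Measurable (fun ω' => ‖x n • e0 + β 1 ω'‖) := (measurable_const.add (hmb 1)).norm
    have hbx : Measurable (bp β (x n)) := measurable_pi_lambda _ fun s =>
        (measurable_const.add (hmb s)).norm
    have := hfm.comp hbx
    have h3 : Measurable (fun ω' => f (bp β (x n) ω')) := this
    fun_prop
  have hF := lintegral_liminf_le (μ := Q) (u := atTop) hm
  have h1 : ∫⁻ ω', ENNReal.ofReal (1 / ‖β 1 ω'‖) * f (bp β 0 ω') ∂Q ≤
      ∫⁻ ω', liminf (fun n => ENNReal.ofReal (1 / ‖x n • e0 + β 1 ω'‖) * (f (bp β (x n) ω') : ℝ≥0∞)) atTop ∂Q := by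
    refine lintegral_mono fun ω' => ?_
    by_cases h0 : ‖β 1 ω'‖ = 0
    · simp [h0]
    · refine (Tendsto.liminf_eq ?_).ge
      have hs : ∀ s, Tendsto (fun n => ‖x n • e0 + β s ω'‖) atTop (𝓝 ‖(0:ℝ) • e0 + β s ω'‖) := fun s =>
        ((hx.smul_const e0).add_const _).norm
      refine ENNReal.Tendsto.mul ?_ (Or.inr (by simp)) ?_ (Or.inr (by simp))
      · refine ENNReal.tendsto_ofReal ?_
        have := hs 1
        simp only [zero_smul, zero_add] at this
        exact tendsto_const_nhds.div this h0
      · refine ENNReal.tendsto_coe.2 ((hf.tendsto _).comp ?_)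
        exact tendsto_pi_nhds.2 fun s => hs s
  have h2 : liminf (fun n => ∫⁻ ω', ENNReal.ofReal (1 / ‖x n • e0 + β 1 ω'‖) * (f (bp β (x n) ω') : ℝ≥0∞) ∂Q) atTop ≤ l := by
    refine liminf_le_of_frequently_le' (Frequently.of_forall fun n => (hx2 n).le)
  exact absurd (hl.trans_le (h1.trans (hF.trans h2))) (lt_irrefl _)

end Imhof

namespace Imhof
open scoped Topology
variable {Ω : Type*} [mΩ : MeasurableSpace Ω] {P : Measure Ω} [IsProbabilityMeasure P]
  {W : ℝ → Ω → ℝ}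
variable {Ω' : Type*} [MeasurableSpace Ω'] {Q : Measure Ω'} [IsProbabilityMeasure Q]
  {β : ℝ → Ω' → E3}

lemma sum_bdd (hW : IsStdBM P W) (φ : ℝ → Ω → ℝ≥0∞) {C : ℝ≥0∞} (hC : ∀ a ω, φ a ω ≤ C) (N : ℕ) (ω : Ω) :
    ∑ j ∈ Finset.range N, (Dg W N j).indicator (φ (tg N j)) ω ≤ C := by
  by_cases h : ⌊lastZero W ω * (N + 1)⌋₊ < N
  · rw [Finset.sum_eq_single ⌊lastZero W ω * (N + 1)⌋₊]
    · exact (indicator_le_self _ _ _).trans (hC _ _)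
    · intro j hj hne
      exact indicator_of_notMem (fun hc => hne ((Dg_iff hW (Finset.mem_range.1 hj) ω).1 hc).symm) _
    · intro hc; exact absurd (Finset.mem_range.2 h) hc
  · rw [Finset.sum_eq_zero]
    · exact zero_le
    · intro j hj
      refine indicator_of_notMem (fun hc => h ?_) _
      rw [(Dg_iff hW (Finset.mem_range.1 hj) ω).1 hc]; exact Finset.mem_range.1 hj

lemma sum_lim (hW : IsStdBM P W) (φ : ℝ → Ω → ℝ≥0∞) {C : ℝ≥0∞} (hCt : C ≠ ∞) (hC : ∀ a ω, φ a ω ≤ C)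
    (hm : ∀ a, Measurable (φ a)) {y : Ω → ℝ≥0∞}
    (hφ : ∀ ω, lastZero W ω < 1 → Tendsto (fun a => φ a ω) (𝓝 (lastZero W ω)) (𝓝 (y ω))) :
    Tendsto (fun N => ∑ j ∈ Finset.range N, ∫⁻ ω in Dg W N j, φ (tg N j) ω ∂P) atTop (𝓝 (∫⁻ ω, y ω ∂P)) := by
  have hmi : ∀ N j, Measurable ((Dg W N j).indicator (φ (tg N j))) := fun N j =>
    (hm _).indicator (Dg_meas hW N j)
  have h := tendsto_lintegral_of_dominated_convergence (μ := P) (F := fun N ω =>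
    ∑ j ∈ Finset.range N, (Dg W N j).indicator (φ (tg N j)) ω) (f := y) (fun _ => C)
    (fun N => Finset.measurable_sum _ fun j _ => hmi N j)
    (fun N => Eventually.of_forall fun ω => sum_bdd hW φ hC N ω) (by simpa using hCt)
    (by filter_upwards [lz_ae hW] with ω hω using sum_conv hW φ hω (hφ ω hω))
  refine h.congr fun N => ?_
  rw [lintegral_finsetSum _ (fun j _ => hmi N j)]
  exact Finset.sum_congr rfl fun j _ => lintegral_indicator (Dg_meas hW N j) _

lemma Ag_G0 (hW : IsStdBM P W) (N j : ℕ) : MeasurableSet[Gs W (tg N j) 0] (Ag W N j) := by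
  refine Zs_meas hW.cont fun u hu => Gs_meas ?_ (by simpa using hu.2)
  exact le_trans (by positivity) hu.1

lemma Phi_one_le (hβ : IsStdBMVec 3 Q β) {x : ℝ} (hx : 0 < x) :
    Phi Q β (fun _ => 1) x ≤ ENNReal.ofReal x * ENNReal.ofReal √(2 / π) := by
  unfold Phi
  gcongr
  simp only [mul_one]
  rw [bes_one hβ zero_le_one (h := fun r => ENNReal.ofReal (1 / r)) (by fun_prop) hx.le]
  exact KK_inv_le hx

lemma lower (hW : IsStdBM P W) (hβ : IsStdBMVec 3 Q β) {f : (Icc (0:ℝ) 1 → ℝ) → NNReal}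
    (hf : Continuous f) (hfm : Measurable f) {C : NNReal} (hC : ∀ p, f p ≤ C) :
    ∫⁻ ω', ENNReal.ofReal (1 / ‖β 1 ω'‖) * f (bp β 0 ω') ∂Q ≤
      ENNReal.ofReal √(2 / π) * ∫⁻ ω, f (Mp W (lastZero W ω) ω) ∂P := by
  refine le_of_forall_lt fun l hl => ?_
  obtain ⟨l', hll, hl'⟩ := exists_between hl
  refine hll.trans_le ?_
  obtain ⟨δ, hδ, hδ'⟩ := fatou hβ hf hfm hl'
  have hfm' : Measurable (fun p => (f p : ℝ≥0∞)) := hfm.coe_nnreal_ennreal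
  have lim1 := sum_lim (P := P) hW (fun a ω => (f (Mp W a ω) : ℝ≥0∞)) (C := C) (by simp)
    (fun a ω => by exact_mod_cast hC _) (fun a => hfm'.comp (Mp_meas hW a))
    (y := fun ω => (f (Mp W (lastZero W ω) ω) : ℝ≥0∞))
    (fun ω hω => ENNReal.tendsto_coe.2 ((hf.tendsto _).comp (Mp_tend hW ω hω)))
  have hV : ∀ a, MeasurableSet {ω | |Xs W a 0 ω| ≤ δ} := fun a =>
    measurableSet_le (((hW.measurable _).div_const _).abs) measurable_const
  have lim2 := sum_lim (P := P) hW (fun a ω => {ω | |Xs W a 0 ω| ≤ δ}.indicator (fun _ => (1:ℝ≥0∞)) ω) (C := 1) (by simp)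
    (fun a ω => indicator_le_self _ _ _) (fun a => measurable_const.indicator (hV a))
    (y := fun ω => 1) (by
      intro ω hω
      refine tendsto_const_nhds.congr' ?_
      have h1 : √(1 - lastZero W ω) ≠ 0 := (Real.sqrt_pos.2 (by linarith)).ne'
      have hc : ContinuousAt (fun a => |Xs W a 0 ω|) (lastZero W ω) := by
        unfold Xs
        have hc := hW.cont ω
        have h3 : ContinuousAt (fun a => W (a + 0 * (1 - a)) ω) (lastZero W ω) :=
          (hc.comp (by fun_prop : Continuous fun a : ℝ => a + 0 * (1 - a))).continuousAt
        have h4 : ContinuousAt (fun a => √(1 - a)) (lastZero W ω) := by fun_prop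
        exact (h3.div h4 h1).abs
      have h0 : |Xs W (lastZero W ω) 0 ω| = 0 := by
        simp [Xs, (lz_great hW ω).1.2]
      have h2 : ∀ᶠ a in 𝓝 (lastZero W ω), |Xs W a 0 ω| < δ :=
        hc.eventually_lt_const (by simp only [h0]; exact hδ)
      filter_upwards [h2] with a ha
      rw [indicator_of_mem (by exact ha.le)])
  rw [lintegral_one, measure_univ] at lim2
  have hle : ∀ N, l' * ∑ j ∈ Finset.range N, ∫⁻ ω in Dg W N j, {ω | |Xs W (tg N j) 0 ω| ≤ δ}.indicator (fun _ => (1:ℝ≥0∞)) ω ∂P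
     ≤ ENNReal.ofReal √(2 / π) * ∑ j ∈ Finset.range N, ∫⁻ ω in Dg W N j, (f (Mp W (tg N j) ω) : ℝ≥0∞) ∂P := by
    intro N
    rw [Finset.mul_sum, Finset.mul_sum]
    refine Finset.sum_le_sum fun j hj => ?_
    have ht := tg_lt (Finset.mem_range.1 hj)
    have hX := Xs_bmf hW (tg_pos N j).le ht
    have hA := Ag_G0 hW N j
    have hVG : MeasurableSet[Gs W (tg N j) 0] {ω | |Xs W (tg N j) 0 ω| ≤ δ} :=
      (hX.adapted 0 le_rfl) (measurableSet_le (f := fun y : ℝ => |y|) (g := fun _ => δ) (by fun_prop) measurable_const)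
    have p1 := path_id hX hβ hA hfm'
    have p2 := path_id hX hβ (hA.inter hVG) (F := fun _ => 1) measurable_const
    rw [Xs_Zs ht] at p1 p2
    simp only [Mp_eq]
    have e1 : ∫⁻ ω in Dg W N j, {ω | |Xs W (tg N j) 0 ω| ≤ δ}.indicator (fun _ => (1:ℝ≥0∞)) ω ∂P
        = ∫⁻ ω in (Ag W N j ∩ {ω | |Xs W (tg N j) 0 ω| ≤ δ}) \ Zs W (tg N j) 1, 1 ∂P := by
      rw [setLIntegral_indicator (hV _)]
      congr 2
      ext ω; simp only [Dg, mem_inter_iff, Set.mem_sdiff]; tauto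
    rw [e1, p2, show Dg W N j = Ag W N j \ Zs W (tg N j) 1 from rfl, p1]
    have hVA : MeasurableSet (Ag W N j ∩ {ω | |Xs W (tg N j) 0 ω| ≤ δ}) := (Zs_meas0 hW _ _).inter (hV _)
    calc l' * ∫⁻ ω in Ag W N j ∩ {ω | |Xs W (tg N j) 0 ω| ≤ δ}, Phi Q β (fun _ => 1) |Xs W (tg N j) 0 ω| ∂P
        ≤ ∫⁻ ω in Ag W N j ∩ {ω | |Xs W (tg N j) 0 ω| ≤ δ}, l' * Phi Q β (fun _ => 1) |Xs W (tg N j) 0 ω| ∂P :=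
          lintegral_const_mul_le _ _
      _ ≤ ∫⁻ ω in Ag W N j ∩ {ω | |Xs W (tg N j) 0 ω| ≤ δ}, ENNReal.ofReal √(2 / π) * Phi Q β (fun p => f p) |Xs W (tg N j) 0 ω| ∂P := by
          refine setLIntegral_mono' hVA fun ω hω => ?_
          rcases (abs_nonneg (Xs W (tg N j) 0 ω)).eq_or_lt with h | h
          · rw [← h]; simp [Phi]
          · calc l' * Phi Q β (fun _ => 1) |Xs W (tg N j) 0 ω| 
               ≤ l' * (ENNReal.ofReal |Xs W (tg N j) 0 ω| * ENNReal.ofReal √(2 / π)) := by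
                  gcongr; exact Phi_one_le hβ h
              _ = ENNReal.ofReal √(2 / π) * (ENNReal.ofReal |Xs W (tg N j) 0 ω| * l') := by ring
              _ ≤ _ := by
                  unfold Phi; gcongr; exact hδ' _ h hω.2
      _ = ENNReal.ofReal √(2 / π) * ∫⁻ ω in Ag W N j ∩ {ω | |Xs W (tg N j) 0 ω| ≤ δ}, Phi Q β (fun p => f p) |Xs W (tg N j) 0 ω| ∂P :=
          lintegral_const_mul' _ _ (by simp)
      _ ≤ _ := by
          gcongr
          exact inter_subset_left
  have := le_of_tendsto_of_tendsto' (ENNReal.Tendsto.const_mul lim2 (Or.inl one_ne_zero))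
    (ENNReal.Tendsto.const_mul lim1 (Or.inr (by simp))) hle
  simpa using this

/-- the reference measure -/
noncomputable def nuQ (Q : Measure Ω') (β : ℝ → Ω' → E3) : Measure (Icc (0:ℝ) 1 → ℝ) :=
  (Q.withDensity (fun ω' => ENNReal.ofReal √(π / 2) * ENNReal.ofReal (1 / ‖β 1 ω'‖))).map (bp β 0)

lemma bp_meas (hβ : IsStdBMVec 3 Q β) (x : ℝ) : Measurable (bp β x) :=
  measurable_pi_lambda _ fun s => (measurable_const.add (beta_meas hβ s)).norm

lemma nu_lint (hβ : IsStdBMVec 3 Q β) {F : (Icc (0:ℝ) 1 → ℝ) → ℝ≥0∞} (hF : Measurable F) :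
    ∫⁻ p, F p ∂(nuQ Q β) = ENNReal.ofReal √(π / 2) * ∫⁻ ω', ENNReal.ofReal (1 / ‖β 1 ω'‖) * F (bp β 0 ω') ∂Q := by
  have hb := bp_meas hβ 0
  have h1 : Measurable (fun ω' => ‖β 1 ω'‖) := (beta_meas hβ 1).norm
  have h2 : Measurable (fun ω' => F (bp β 0 ω')) := hF.comp hb
  unfold nuQ
  rw [lintegral_map hF hb, lintegral_withDensity_eq_lintegral_mul _ (by fun_prop) h2,
    ← lintegral_const_mul _ (by fun_prop)]
  simp only [Pi.mul_apply, mul_assoc]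

lemma sqrt_mul_one : ENNReal.ofReal √(π / 2) * ENNReal.ofReal √(2 / π) = 1 := by
  rw [← ENNReal.ofReal_mul (Real.sqrt_nonneg _), ← Real.sqrt_mul (by positivity)]
  have : π / 2 * (2 / π) = 1 := by field_simp
  rw [this]; simp

lemma nu_prob (hβ : IsStdBMVec 3 Q β) : IsProbabilityMeasure (nuQ Q β) := by
  constructor
  have h := nu_lint hβ (F := fun _ => 1) measurable_const
  rw [lintegral_one] at h
  rw [h]
  have h2 := bes_one hβ zero_le_one (h := fun r => ENNReal.ofReal (1 / r)) (by fun_prop) (le_refl (0:ℝ))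
  simp only [zero_smul, zero_add, KK_inv_zero] at h2
  simp only [mul_one, h2, sqrt_mul_one]

lemma laws_eq (hW : IsStdBM P W) (hβ : IsStdBMVec 3 Q β) :
    P.map (fun ω => Mp W (lastZero W ω) ω) = nuQ Q β := by
  have hmp := mp_meas hW
  set μ := P.map (fun ω => Mp W (lastZero W ω) ω) with hμ
  have : IsProbabilityMeasure μ := Measure.isProbabilityMeasure_map hmp.aemeasurable
  have := nu_prob hβ
  have hlow : ∀ (f : (Icc (0:ℝ) 1 → ℝ) → NNReal) (hf : Continuous f) (hfm : Measurable f) (C : NNReal) (hC : ∀ p, f p ≤ C),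
      ∫⁻ p, f p ∂(nuQ Q β) ≤ ∫⁻ p, f p ∂μ := by
    intro f hf hfm C hC
    have hfm' : Measurable (fun p => (f p : ℝ≥0∞)) := hfm.coe_nnreal_ennreal
    rw [nu_lint hβ hfm', hμ, lintegral_map hfm' hmp]
    calc _ ≤ ENNReal.ofReal √(π / 2) * (ENNReal.ofReal √(2 / π) * ∫⁻ ω, f (Mp W (lastZero W ω) ω) ∂P) := by
          gcongr; exact lower hW hβ hf hfm hC
      _ = _ := by rw [← mul_assoc, sqrt_mul_one, one_mul]
  have heq : ∀ (f : (Icc (0:ℝ) 1 → ℝ) → NNReal) (hf : Continuous f) (hfm : Measurable f) (C : NNReal) (hC : ∀ p, f p ≤ C),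
      ∫⁻ p, f p ∂μ = ∫⁻ p, f p ∂(nuQ Q β) := by
    intro f hf hfm C hC
    refine le_antisymm ?_ (hlow f hf hfm C hC)
    have h2 := hlow (fun p => C - f p) (by fun_prop) (by fun_prop) C (fun p => tsub_le_self)
    have hfm' : Measurable (fun p => (f p : ℝ≥0∞)) := hfm.coe_nnreal_ennreal
    have hs : ∀ ρ : Measure (Icc (0:ℝ) 1 → ℝ), IsProbabilityMeasure ρ →
        ∫⁻ p, f p ∂ρ + ∫⁻ p, ((C - f p : NNReal) : ℝ≥0∞) ∂ρ = C := by
      intro ρ _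
      rw [← lintegral_add_left hfm']
      have : ∀ p, (f p : ℝ≥0∞) + ((C - f p : NNReal) : ℝ≥0∞) = C := fun p => by
        rw [← ENNReal.coe_add, add_tsub_cancel_of_le (hC p)]
      rw [lintegral_congr this]; simp
    have s1 := hs μ inferInstance
    have s2 := hs (nuQ Q β) inferInstance
    have hfin : ∫⁻ p, ((C - f p : NNReal) : ℝ≥0∞) ∂(nuQ Q β) ≠ ∞ := by
      intro h; rw [h] at s2; simp at s2
    have : ∫⁻ p, f p ∂μ + ∫⁻ p, ((C - f p : NNReal) : ℝ≥0∞) ∂(nuQ Q β) ≤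
        ∫⁻ p, f p ∂(nuQ Q β) + ∫⁻ p, ((C - f p : NNReal) : ℝ≥0∞) ∂(nuQ Q β) := by
      rw [s2, ← s1]; gcongr
    exact (ENNReal.add_le_add_iff_right hfin).1 this
  have hproj : ∀ J : Finset (Icc (0:ℝ) 1), μ.map J.restrict = (nuQ Q β).map J.restrict := by
    intro J
    have hJ : Measurable (J.restrict : (Icc (0:ℝ) 1 → ℝ) → (J → ℝ)) := Finset.measurable_restrict J
    have : IsFiniteMeasure (μ.map (J.restrict : (Icc (0:ℝ) 1 → ℝ) → (J → ℝ))) := inferInstance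
    refine ext_of_forall_lintegral_eq_of_IsFiniteMeasure fun f => ?_
    have hfm : Measurable f := f.continuous.measurable
    have hfm' : Measurable (fun p => (f p : ℝ≥0∞)) := hfm.coe_nnreal_ennreal
    rw [lintegral_map hfm' hJ, lintegral_map hfm' hJ]
    have hC : ∀ x, f x ≤ nndist f 0 := fun x => BoundedContinuousFunction.NNReal.upper_bound f x
    refine heq (fun p => f (J.restrict p)) (f.continuous.comp ?_) (hfm.comp hJ) (nndist f 0) fun p => ?_
    · exact continuous_pi fun i => continuous_apply _
    · exact hC _
  have : ∀ J : Finset (Icc (0:ℝ) 1), IsFiniteMeasure ((nuQ Q β).map (J.restrict : (Icc (0:ℝ) 1 → ℝ) → (J → ℝ))) :=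
    fun J => inferInstance
  exact IsProjectiveLimit.unique (P := fun J => (nuQ Q β).map J.restrict) hproj (fun J => rfl)

theorem imhof_main (hW : IsStdBM P W) (hβ : IsStdBMVec 3 Q β) {F : (Icc (0:ℝ) 1 → ℝ) → ℝ≥0∞} (hF : Measurable F) :
    ∫⁻ ω, F (Mp W (lastZero W ω) ω) ∂P = ENNReal.ofReal √(π / 2) *
      ∫⁻ ω', ENNReal.ofReal (1 / ‖β 1 ω'‖) * F (bp β 0 ω') ∂Q := by
  rw [← lintegral_map hF (mp_meas hW), laws_eq hW hβ, nu_lint hβ hF]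

end Imhof

/-- Imhof's relation: for every measurable non-negative functional `F`
on paths on `[0,1]`, `E[F(m)] = √(π/2) · E[(1 / R(1)) · F(R)]`, where `m` is a standard
Brownian meander and `R` a three-dimensional Bessel process started at `0`. -/
theorem imhof_relation
    {Ω : Type*} [MeasurableSpace Ω] (P : Measure Ω) [IsProbabilityMeasure P]
    {Ω' : Type*} [MeasurableSpace Ω'] (Q : Measure Ω') [IsProbabilityMeasure Q]
    (m : ℝ → Ω → ℝ) (hm : IsBrownianMeander P m)
    (β : ℝ → Ω' → EuclideanSpace ℝ (Fin 3)) (hβ : IsStdBMVec 3 Q β)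
    (F : (Icc (0:ℝ) 1 → ℝ) → ℝ≥0∞) (hF : Measurable F) :
    ∫⁻ ω, F (fun s => m s ω) ∂P
      = ENNReal.ofReal (Real.sqrt (π / 2)) *
          ∫⁻ ω, ENNReal.ofReal (1 / bessel3 β 1 ω) * F (fun s => bessel3 β s ω) ∂Q := by
  obtain ⟨W, hW, hmW⟩ := hm
  have e1 : ∀ ω, (fun s : Icc (0:ℝ) 1 => m s ω) = Imhof.Mp W (lastZero W ω) ω := fun ω => by
    ext s; rw [hmW ω s s.2]; rfl
  have e2 : ∀ ω, (fun s : Icc (0:ℝ) 1 => bessel3 β s ω) = Imhof.bp β 0 ω := fun ω => by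
    ext s; simp [Imhof.bp, bessel3]
  simp only [e1, e2]
  exact Imhof.imhof_main hW hβ hF
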